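/- arXiv:2603.21538 — 2 statements merged into one kernel-verified Lean document; each statement's English description precedes it below -/
import Mathlib

section
/- Every (bull, 4K1)-free graph is perfectly weight divisible, and hence perfectly divisible. -/
/-!
The complement `H = Gᶜ` is again bull-free, and it is `K₄`-free. The key fact
(`exists_vertex_bipartite_nbhd`) is that every nonempty bull-free, `K₄`-free graph `H` has a vertex
`v` whose neighbourhood is bipartite. Granting this for `H` induced on `s`, let `P` consist of `v`
and its non-neighbours in `G`, and `W` of its `G`-neighbours. Then `G[P]` is a co-bipartite graph
plus an isolated vertex, hence perfect by Hall's theorem (`isPerfect_of_cobipartite`), and every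
clique of `W` can be enlarged by `v`, so its weight is not maximum. Unit weights give perfect
divisibility.

To find `v`, suppose no neighbourhood is bipartite. Neighbourhoods are triangle-free, so the
neighbourhood of any `v` contains an odd hole `c` of length `n ≥ 5` (`exists_oddHole`).
Bull-freeness forces each vertex that is not adjacent to `v` but has a neighbour on `c` to be
adjacent to all of `c` except possibly one vertex or two consecutive ones (`missing_consecutive`).
Since the neighbours of `c i` that are adjacent to `v` are independent, the neighbourhood of `c i`
has an edge `x y` with both ends not adjacent to `v` (`exists_edge_nonadj`). If `n ≥ 7`, some edge
of the hole is complete to both `x` and `y`, a `K₄`. If `n = 5`, the edges obtained in this way at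
two consecutive vertices of the hole produce a bull.
-/

open SimpleGraph

/-- `H` is isomorphic to an induced subgraph of `G`. -/
def ContainsInduced {α β : Type*} (G : SimpleGraph α) (H : SimpleGraph β) : Prop :=
  ∃ f : β ↪ α, ∀ a b, G.Adj (f a) (f b) ↔ H.Adj a b

/-- `G` is `H`-free: `G` does not contain `H` as an induced subgraph. -/
def IsFree {α β : Type*} (G : SimpleGraph α) (H : SimpleGraph β) : Prop :=
  ¬ ContainsInduced G H

/-- The clique number of the subgraph of `G` induced on `s`. -/
noncomputable def cliqueNumOn {V : Type*} (G : SimpleGraph V) (s : Set V) : ℕ :=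
  sSup {n | ∃ t : Finset V, ↑t ⊆ s ∧ G.IsNClique n t}

/-- The maximum `w`-weight of a clique of `G` contained in `s`. -/
noncomputable def wCliqueNumOn {V : Type*} (G : SimpleGraph V) (w : V → ℕ) (s : Set V) : ℕ :=
  sSup {n | ∃ t : Finset V, ↑t ⊆ s ∧ G.IsClique (↑t : Set V) ∧ ∑ v ∈ t, w v = n}

/-- A graph is perfect if every induced subgraph has chromatic number equal to clique number. -/
def IsPerfect {V : Type*} (G : SimpleGraph V) : Prop :=
  ∀ s : Set V, (G.induce s).chromaticNumber = (cliqueNumOn G s : ℕ∞)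

/-- `G` is perfectly divisible: every (nonempty) induced subgraph `H` of `G` admits a partition
`(A, B)` of its vertex set with `H[A]` perfect and `ω(H[B]) < ω(H)`. -/
def PerfectlyDivisible {V : Type*} (G : SimpleGraph V) : Prop :=
  ∀ s : Set V, s.Nonempty →
    ∃ A B : Set V, A ∪ B = s ∧ A ∩ B = ∅ ∧
      IsPerfect (G.induce A) ∧ cliqueNumOn G B < cliqueNumOn G s

/-- `G` is perfectly weight divisible: for every positive integer weight function `w` and every
(nonempty) induced subgraph `H` of `G`, there is a partition `(P, W)` of its vertex set with
`H[P]` perfect and the maximum weight of a clique of `H[W]` less than that of `H`. -/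
def PerfectlyWeightDivisible {V : Type*} (G : SimpleGraph V) : Prop :=
  ∀ w : V → ℕ, (∀ v, 0 < w v) →
    ∀ s : Set V, s.Nonempty →
      ∃ P W : Set V, P ∪ W = s ∧ P ∩ W = ∅ ∧
        IsPerfect (G.induce P) ∧ wCliqueNumOn G w W < wCliqueNumOn G w s

/-- The bull: a triangle `{0,1,2}` with pendant edges `0-3` and `1-4`. -/
def bull : SimpleGraph (Fin 5) :=
  SimpleGraph.fromEdgeSet {s(0,1), s(0,2), s(1,2), s(0,3), s(1,4)}

/-- The house: the complement of the path on 5 vertices. -/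
def house : SimpleGraph (Fin 5) := (SimpleGraph.pathGraph 5)ᶜ

/-- The hammer: a triangle `{0,1,2}` together with the path `2-3-4`. -/
def hammer : SimpleGraph (Fin 5) :=
  SimpleGraph.fromEdgeSet {s(0,1), s(0,2), s(1,2), s(2,3), s(3,4)}

/-- The diamond: `K₄` minus an edge. -/
def diamond : SimpleGraph (Fin 4) :=
  SimpleGraph.fromEdgeSet {s(0,1), s(0,2), s(0,3), s(1,2), s(1,3)}

/-- The odd torch built on the cycle `C_k` from a set `S` of cycle vertices: two new adjacent
vertices are added, the first adjacent exactly to `S`, the second to no cycle vertex. -/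
def oddTorch (k : ℕ) (S : Set (Fin k)) : SimpleGraph (Fin k ⊕ Fin 2) :=
  SimpleGraph.fromRel (fun a b =>
    match a, b with
    | Sum.inl i, Sum.inl j => (SimpleGraph.cycleGraph k).Adj i j
    | Sum.inl i, Sum.inr u => u = 0 ∧ i ∈ S
    | Sum.inr _, Sum.inl _ => False
    | Sum.inr u, Sum.inr v => u ≠ v)

/-- `G` contains no odd torch as an induced subgraph. -/
def OddTorchFree {V : Type*} (G : SimpleGraph V) : Prop :=
  ∀ (k : ℕ) (S : Set (Fin k)), 5 ≤ k → Odd k → S.Nonempty →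
    (∀ i ∈ S, ∀ j ∈ S, ¬ (SimpleGraph.cycleGraph k).Adj i j) →
    IsFree G (oddTorch k S)

/-- `G` is locally perfect: the neighbourhood of each vertex induces a perfect graph. -/
def LocallyPerfect {V : Type*} (G : SimpleGraph V) : Prop :=
  ∀ v : V, IsPerfect (G.induce (G.neighborSet v))

/-- `N(X)`: vertices outside `X` with a neighbour in `X`. -/
def nbhd {V : Type*} (G : SimpleGraph V) (X : Set V) : Set V :=
  {u | u ∉ X ∧ ∃ x ∈ X, G.Adj u x}

/-- `M(X) = V(G) \ (X ∪ N(X))`: vertices outside `X` with no neighbour in `X`. -/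
def antiNbhd {V : Type*} (G : SimpleGraph V) (X : Set V) : Set V :=
  {u | u ∉ X ∧ ∀ x ∈ X, ¬ G.Adj u x}

/-- Minimally non-perfectly divisible. -/
def MNPD {V : Type*} (G : SimpleGraph V) : Prop :=
  ¬ PerfectlyDivisible G ∧ ∀ s : Set V, s ≠ Set.univ → PerfectlyDivisible (G.induce s)

/-- Minimally non-perfectly weight divisible. -/
def MNWD {V : Type*} (G : SimpleGraph V) : Prop :=
  ¬ PerfectlyWeightDivisible G ∧ ∀ s : Set V, s ≠ Set.univ → PerfectlyWeightDivisible (G.induce s)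

/-! ### Odd holes in a non-bipartite neighbourhood -/

section OddHole

variable {V : Type*} {H : SimpleGraph V}

/-- `c` is a closed walk of length `n` in `H`, indexed cyclically, inside the neighbourhood of
`v`; vertices and edges may repeat. -/
def IsWheel (H : SimpleGraph V) (v : V) (n : ℕ) (c : ZMod n → V) : Prop :=
  (∀ i, H.Adj (c i) (c (i + 1))) ∧ ∀ i, H.Adj v (c i)

lemma exists_isWheel_of_nat {v : V} {n : ℕ} (hn : 0 < n) (d : ℕ → V)
    (hd : ∀ i < n, H.Adj (d i) (d (i + 1))) (hc : d n = d 0) (hv : ∀ i, H.Adj v (d i)) :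
    ∃ c, IsWheel H v n c := by
  have : NeZero n := ⟨hn.ne'⟩
  refine ⟨fun i => d i.val, fun i => ?_, fun i => hv _⟩
  have hi := ZMod.val_lt i
  have key : d (i + 1).val = d (i.val + 1) := by
    rcases Nat.lt_or_ge (i.val + 1) n with h | h
    · congr 1
      have h1 : ((i.val + 1 : ℕ) : ZMod n) = i + 1 := by simp
      rw [← h1, ZMod.val_natCast, Nat.mod_eq_of_lt h]
    · have h2 : i.val + 1 = n := by omega
      have h1 : ((i.val + 1 : ℕ) : ZMod n) = i + 1 := by simp
      have h3 : i + 1 = 0 := by rw [← h1, h2]; simp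
      rw [h3, h2, hc]; simp
  show H.Adj (d i.val) (d (i + 1).val)
  rw [key]
  exact hd _ hi

/-- The condition on `f` says that the neighbourhood of `v` is bipartite; `f` is defined on all of
`V` to avoid subtypes. -/
lemma exists_odd_isWheel {v : V}
    (h : ¬ ∃ f : V → Bool, ∀ x y, H.Adj v x → H.Adj v y → H.Adj x y → f x ≠ f y) :
    ∃ n, Odd n ∧ ∃ c, IsWheel H v n c := by
  by_contra hno
  apply h
  have hcol : (H.induce (H.neighborSet v)).Colorable 2 := by
    rw [SimpleGraph.two_colorable_iff_forall_loop_even]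
    intro u w
    by_contra hodd
    rw [Nat.not_even_iff_odd] at hodd
    refine hno ⟨w.length, hodd, exists_isWheel_of_nat hodd.pos (fun i => (w.getVert i : V)) ?_ ?_ ?_⟩
    · intro i hi
      exact w.adj_getVert_succ hi
    · simp
    · intro i
      exact (w.getVert i).2
  obtain ⟨g⟩ := hcol
  classical
  refine ⟨fun x => if hx : H.Adj v x then decide (g ⟨x, hx⟩ = 0) else true, ?_⟩
  intro x y hx hy hxy
  have hne : g ⟨x, hx⟩ ≠ g ⟨y, hy⟩ := g.valid (by simpa using hxy)
  simp only [hx, hy, dif_pos]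
  generalize g ⟨x, hx⟩ = p at *
  generalize g ⟨y, hy⟩ = q at *
  revert p q
  decide

/-- A chord joining the ends of an arc of length `k` closes that arc to a walk of length `k + 1`. In
an odd closed walk one of the two arcs has even length, which gives a shorter odd closed walk. -/
lemma isWheel_shortcut {v : V} {n : ℕ} {c : ZMod n → V} (hc : IsWheel H v n c)
    (i : ZMod n) (k : ℕ) (hadj : H.Adj (c i) (c (i + k))) :
    ∃ c', IsWheel H v (k + 1) c' := by
  refine exists_isWheel_of_nat (Nat.succ_pos k)
    (fun t => if t ≤ k then c (i + t) else c i) ?_ ?_ ?_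
  · intro t ht
    rcases Nat.lt_or_ge t k with h | h
    · have h1 : t ≤ k := h.le
      have h2 : t + 1 ≤ k := h
      simp only [h1, h2, if_true]
      have := hc.1 (i + t)
      push_cast
      rwa [add_assoc] at this
    · have h1 : t = k := by omega
      subst h1
      simpa using hadj.symm
  · simp
  · intro t
    split_ifs <;> exact hc.2 _

/-- A non-bipartite neighbourhood in a `K₄`-free graph contains an odd hole of length at least `5`,
namely a shortest odd closed walk. Injectivity of `c` is not asserted: it follows from the adjacency
pattern and is not needed. -/
lemma exists_oddHole (hK4 : ∀ a b c d, H.Adj a b → H.Adj a c → H.Adj a d → H.Adj b c →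
      H.Adj b d → H.Adj c d → False) {v : V}
    (h : ¬ ∃ f : V → Bool, ∀ x y, H.Adj v x → H.Adj v y → H.Adj x y → f x ≠ f y) :
    ∃ n, 5 ≤ n ∧ Odd n ∧ ∃ c : ZMod n → V, (∀ i, H.Adj v (c i)) ∧
      ∀ i j, H.Adj (c i) (c j) ↔ j = i + 1 ∨ i = j + 1 := by
  classical
  have hex := exists_odd_isWheel h
  obtain ⟨hodd, c, hc⟩ := Nat.find_spec hex
  have hmin : ∀ m, Odd m → (∃ c, IsWheel H v m c) → Nat.find hex ≤ m :=
    fun m h1 h2 => Nat.find_min' hex ⟨h1, h2⟩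
  generalize Nat.find hex = n at *
  have hn0 : 0 < n := hodd.pos
  have : NeZero n := ⟨hn0.ne'⟩
  have hn1 : n ≠ 1 := by
    rintro rfl
    exact (hc.1 0).ne (congrArg c (Subsingleton.elim _ _))
  have hn3 : n ≠ 3 := by
    rintro rfl
    exact hK4 v (c 0) (c 1) (c 2) (hc.2 _) (hc.2 _) (hc.2 _) (hc.1 0) (hc.1 2).symm (hc.1 1)
  have hn : 5 ≤ n := by
    obtain ⟨k, hk⟩ := hodd
    omega
  refine ⟨n, hn, hodd, c, hc.2, fun i j => ⟨fun hij => ?_, ?_⟩⟩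
  · -- An edge between non-consecutive vertices is a chord, against minimality of `n`.
    by_contra hcon
    push Not at hcon
    obtain ⟨k, hk, rfl⟩ : ∃ k : ℕ, k < n ∧ j = i + k :=
      ⟨(j - i).val, ZMod.val_lt _, by simp⟩
    have hk0 : k ≠ 0 := by
      rintro rfl
      simp at hij
    have hk1 : k ≠ 1 := by
      rintro rfl
      simp at hcon
    have hk2 : k + 1 ≠ n := by
      intro hk2
      apply hcon.2
      have : ((k + 1 : ℕ) : ZMod n) = 0 := by rw [hk2]; simp
      push_cast at this
      rw [add_assoc, this, add_zero]
    rcases Nat.even_or_odd k with he | ho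
    · have := hmin (k + 1) he.add_one (isWheel_shortcut hc i k hij)
      omega
    · have he : Even (n - k) := Nat.Odd.sub_odd hodd ho
      have hback : H.Adj (c (i + k)) (c (i + k + ((n - k : ℕ) : ZMod n))) := by
        have : i + (k : ZMod n) + ((n - k : ℕ) : ZMod n) = i := by
          rw [Nat.cast_sub hk.le]; simp
        rw [this]
        exact hij.symm
      have := hmin (n - k + 1) he.add_one (isWheel_shortcut hc _ _ hback)
      omega
  · rintro (rfl | rfl)
    · exact hc.1 i
    · exact (hc.1 j).symm

end OddHole

/-! ### A vertex with bipartite neighbourhood -/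

section Wheel

variable {V : Type*} {H : SimpleGraph V}

lemma natCast_ne_zero_of_lt {n : ℕ} (k : ℕ) (h0 : 0 < k) (h : k < n) : (k : ZMod n) ≠ 0 := by
  rw [Ne, ZMod.natCast_eq_zero_iff]
  exact fun hd => absurd (Nat.le_of_dvd h0 hd) (by omega)

/-- In `hbull` the triangle is `a b c`, with pendant edges `a d` and `b e`. A vertex `u` that is not
adjacent to the centre `v` of a hole but has a neighbour on the hole misses at most two vertices of
the hole, and these are consecutive. -/
lemma missing_consecutive
    (hbull : ∀ a b c d e, H.Adj a b → H.Adj a c → H.Adj b c → H.Adj a d → H.Adj b e →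
      ¬ H.Adj a e → ¬ H.Adj b d → ¬ H.Adj c d → ¬ H.Adj c e → ¬ H.Adj d e → False)
    {v u : V} {n : ℕ} (hn : 5 ≤ n) {c : ZMod n → V} (hv : ∀ i, H.Adj v (c i))
    (hc : ∀ i j, H.Adj (c i) (c j) ↔ j = i + 1 ∨ i = j + 1) (huv : ¬ H.Adj v u)
    {i₀ : ZMod n} (hi₀ : H.Adj u (c i₀)) :
    ∃ j, ∀ i, ¬ H.Adj u (c i) → i = j ∨ i = j + 1 := by
  have : NeZero n := ⟨by omega⟩
  have h1 : (1 : ZMod n) ≠ 0 := by simpa using natCast_ne_zero_of_lt (n := n) 1 (by omega) (by omega)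
  have h2 : (2 : ZMod n) ≠ 0 := by simpa using natCast_ne_zero_of_lt (n := n) 2 (by omega) (by omega)
  have h3 : (3 : ZMod n) ≠ 0 := by simpa using natCast_ne_zero_of_lt (n := n) 3 (by omega) (by omega)
  have h4 : (4 : ZMod n) ≠ 0 := by simpa using natCast_ne_zero_of_lt (n := n) 4 (by omega) (by omega)
  -- If this fails, then `v, c x, c p` is a triangle with pendant vertices `c q` at `v` and `u` at
  -- `c x`.
  have rule : ∀ x p q, H.Adj u (c x) → ¬ H.Adj u (c p) → ¬ H.Adj u (c q) → H.Adj (c x) (c p) →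
      ¬ H.Adj (c p) (c q) → H.Adj (c x) (c q) := by
    intro x p q hx hp hq hxp hpq
    by_contra hxq
    exact hbull v (c x) (c p) (c q) u (hv _) (hv _) hxp (hv _) hx.symm huv hxq hpq
      (fun h => hp h.symm) (fun h => hq h.symm)
  by_cases hall : ∀ i, H.Adj u (c i)
  · exact ⟨0, fun i hi => absurd (hall i) hi⟩
  obtain ⟨i, hi, hi1⟩ : ∃ i, H.Adj u (c i) ∧ ¬ H.Adj u (c (i + 1)) := by
    by_contra hno
    push Not at hno
    apply hall
    have step : ∀ t : ℕ, H.Adj u (c (i₀ + t)) := by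
      intro t
      induction t with
      | zero => simpa using hi₀
      | succ t ih =>
        have := hno _ ih
        push_cast
        rwa [add_assoc] at this
    intro i
    simpa using step (i - i₀).val
  have hprev : H.Adj u (c (i - 1)) := by
    by_contra hm
    have hi2 : H.Adj u (c (i + 2)) := by
      by_contra hm2
      have h := rule i (i - 1) (i + 2) hi hm hm2 ((hc _ _).2 (by right; ring)) (by
        rw [hc]
        rintro (h | h)
        · exact h2 (by linear_combination h)
        · exact h4 (by linear_combination -h))
      rw [hc] at h
      rcases h with h | h
      · exact h1 (by linear_combination h)
      · exact h3 (by linear_combination -h)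
    have h := rule (i + 2) (i + 1) (i - 1) hi2 hi1 hm ((hc _ _).2 (by right; ring)) (by
      rw [hc]
      rintro (h | h)
      · exact h3 (by linear_combination -h)
      · exact h1 (by linear_combination h))
    rw [hc] at h
    rcases h with h | h
    · exact h4 (by linear_combination -h)
    · exact h2 (by linear_combination h)
  refine ⟨i + 1, fun q hq => ?_⟩
  by_contra hcon
  push Not at hcon
  have h := rule i (i + 1) q hi hi1 hq ((hc _ _).2 (Or.inl rfl)) (by
    rw [hc]
    rintro (h | h)
    · exact hcon.2 h
    · have : q = i := by linear_combination -h
      exact hq (this ▸ hi))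
  rw [hc] at h
  rcases h with h | h
  · exact hcon.1 h
  · have : q = i - 1 := by linear_combination -h
    exact hq (this ▸ hprev)

/-- The neighbours of `z` adjacent to `v` are independent, because an edge among them would form a
`K₄` with `v` and `z`. So if the neighbours of `z` not adjacent to `v` were independent as well, the
neighbourhood of `z` would be bipartite. -/
lemma exists_edge_nonadj
    (hK4 : ∀ a b c d, H.Adj a b → H.Adj a c → H.Adj a d → H.Adj b c →
      H.Adj b d → H.Adj c d → False) {v z : V} (hvz : H.Adj v z)
    (h : ¬ ∃ f : V → Bool, ∀ x y, H.Adj z x → H.Adj z y → H.Adj x y → f x ≠ f y) :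
    ∃ x y, H.Adj z x ∧ H.Adj z y ∧ H.Adj x y ∧ ¬ H.Adj v x ∧ ¬ H.Adj v y := by
  classical
  by_contra hno
  push Not at hno
  refine h ⟨fun x => decide (H.Adj v x), fun x y hx hy hxy heq => ?_⟩
  rw [decide_eq_decide] at heq
  by_cases hvx : H.Adj v x
  · exact hK4 v z x y hvz hvx (heq.1 hvx) hx hy hxy
  · exact hvx (heq.2 (hno x y hx hy hxy hvx))

/-- `P` and `Q` are the neighbourhoods on a 5-hole of two adjacent vertices, both adjacent to vertex
`0` of the hole and with no edge of the hole in common (by `K₄`-freeness). Up to exchanging the two,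
one of them misses `1` and the other misses `4`, and at least one of them misses a second vertex. -/
lemma five_cycle_pattern (P Q : ZMod 5 → Prop)
    (hP : ∃ j, ∀ i, ¬ P i → i = j ∨ i = j + 1) (hQ : ∃ j, ∀ i, ¬ Q i → i = j ∨ i = j + 1)
    (hP0 : P 0) (hQ0 : Q 0) (hPQ : ∀ t, P t → P (t + 1) → Q t → Q (t + 1) → False) :
    (¬ P 1 ∧ P 3 ∧ P 4 ∧ ¬ Q 4 ∧ Q 1 ∧ Q 2 ∧ ¬ (P 2 ∧ Q 3)) ∨
    (¬ Q 1 ∧ Q 3 ∧ Q 4 ∧ ¬ P 4 ∧ P 1 ∧ P 2 ∧ ¬ (Q 2 ∧ P 3)) := by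
  -- Removing `j` and `j + 1` leaves three consecutive vertices of the cycle, which include both
  -- vertices of one of the pairs `{3, 4}`, `{4, 1}`, `{1, 2}`.
  have split : ∀ R : ZMod 5 → Prop, (∃ j, ∀ i, ¬ R i → i = j ∨ i = j + 1) →
      (R 3 ∧ R 4) ∨ (R 4 ∧ R 1) ∨ (R 1 ∧ R 2) := by
    rintro R ⟨j, hj⟩
    have hj' : ∀ i, ¬ (i = j ∨ i = j + 1) → R i := fun i hi => by_contra fun h => hi (hj i h)
    have cases : ∀ j : ZMod 5,
        (¬ (3 = j ∨ 3 = j + 1) ∧ ¬ (4 = j ∨ 4 = j + 1)) ∨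
        (¬ (4 = j ∨ 4 = j + 1) ∧ ¬ (1 = j ∨ 1 = j + 1)) ∨
        (¬ (1 = j ∨ 1 = j + 1) ∧ ¬ (2 = j ∨ 2 = j + 1)) := by decide
    rcases cases j with h | h | h
    · exact Or.inl ⟨hj' _ h.1, hj' _ h.2⟩
    · exact Or.inr (Or.inl ⟨hj' _ h.1, hj' _ h.2⟩)
    · exact Or.inr (Or.inr ⟨hj' _ h.1, hj' _ h.2⟩)
  have e0 : P 1 → Q 1 → False := fun p q => hPQ 0 hP0 p hQ0 q
  have e2 : P 2 → P 3 → Q 2 → Q 3 → False := hPQ 2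
  have e4 : P 4 → Q 4 → False := fun p q => hPQ 4 p hP0 q hQ0
  rcases split P hP with ⟨p, p'⟩ | ⟨p, p'⟩ | ⟨p, p'⟩ <;>
    rcases split Q hQ with ⟨q, q'⟩ | ⟨q, q'⟩ | ⟨q, q'⟩
  · exact absurd q' (e4 p')
  · exact absurd q (e4 p')
  · exact Or.inl ⟨fun h => e0 h q, p, p', e4 p', q, q', fun h => e2 h.1 p q' h.2⟩
  · exact absurd q' (e4 p)
  · exact absurd q (e4 p)
  · exact absurd q (e0 p')
  · exact Or.inr ⟨e0 p, q, q', fun h => e4 h q', p, p', fun h => e2 p' h.2 h.1 q⟩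
  · exact absurd q' (e0 p)
  · exact absurd q (e0 p)

/-- A nonempty graph that is `K₄`-free and bull-free has a vertex with bipartite neighbourhood. -/
theorem exists_vertex_bipartite_nbhd [Nonempty V]
    (hK4 : ∀ a b c d, H.Adj a b → H.Adj a c → H.Adj a d → H.Adj b c →
      H.Adj b d → H.Adj c d → False)
    (hbull : ∀ a b c d e, H.Adj a b → H.Adj a c → H.Adj b c → H.Adj a d → H.Adj b e →
      ¬ H.Adj a e → ¬ H.Adj b d → ¬ H.Adj c d → ¬ H.Adj c e → ¬ H.Adj d e → False) :
    ∃ v, ∃ f : V → Bool, ∀ x y, H.Adj v x → H.Adj v y → H.Adj x y → f x ≠ f y := by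
  by_contra hno
  push Not at hno
  replace hno : ∀ v, ¬ ∃ f : V → Bool, ∀ x y, H.Adj v x → H.Adj v y → H.Adj x y → f x ≠ f y := by
    rintro v ⟨f, hf⟩
    obtain ⟨x, y, h1, h2, h3, h4⟩ := hno v f
    exact hf x y h1 h2 h3 h4
  obtain ⟨v⟩ := ‹Nonempty V›
  obtain ⟨n, hn, hodd, c, hv, hc⟩ := exists_oddHole hK4 (hno v)
  rcases Nat.lt_or_ge n 7 with hn7 | hn7
  · -- For a 5-hole, apply the pattern at the consecutive hole vertices `c 0` and `c 1`.
    obtain rfl : n = 5 := by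
      obtain ⟨k, hk⟩ := hodd
      omega
    have edge : ∀ i : ZMod 5, ∃ a b, H.Adj a b ∧ H.Adj a (c i) ∧ H.Adj b (c i) ∧
        ¬ H.Adj a (c (1 + i)) ∧ H.Adj a (c (3 + i)) ∧ H.Adj a (c (4 + i)) ∧
        ¬ H.Adj b (c (4 + i)) ∧ H.Adj b (c (1 + i)) ∧ H.Adj b (c (2 + i)) ∧
        ¬ (H.Adj a (c (2 + i)) ∧ H.Adj b (c (3 + i))) := by
      intro i
      obtain ⟨x, y, hx, hy, hxy, hvx, hvy⟩ := exists_edge_nonadj hK4 (hv i) (hno (c i))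
      have hc' : ∀ s t, H.Adj (c (s + i)) (c (t + i)) ↔ t = s + 1 ∨ s = t + 1 := by
        intro s t
        rw [hc, add_right_comm s i 1, add_right_comm t i 1, add_left_inj, add_left_inj]
      have hx0 : H.Adj x (c (0 + i)) := by rw [zero_add]; exact hx.symm
      have hy0 : H.Adj y (c (0 + i)) := by rw [zero_add]; exact hy.symm
      have := five_cycle_pattern (fun t => H.Adj x (c (t + i))) (fun t => H.Adj y (c (t + i)))
        (missing_consecutive hbull hn (c := fun t => c (t + i)) (fun t => hv _) hc' hvx hx0)
        (missing_consecutive hbull hn (c := fun t => c (t + i)) (fun t => hv _) hc' hvy hy0)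
        hx0 hy0 (fun t h1 h2 h3 h4 => hK4 x y _ _ hxy h1 h2 h3 h4 ((hc' _ _).2 (Or.inl rfl)))
      rcases this with h | h
      · exact ⟨x, y, hxy, hx.symm, hy.symm, h⟩
      · exact ⟨y, x, hxy.symm, hy.symm, hx.symm, h⟩
    obtain ⟨a, b, hab, a0, b0, a1, a3, a4, b4, b1, b2, hab'⟩ := edge 0
    obtain ⟨p, q, hpq, p1, q1, p2, p4, p0, q0, q2, q3, hpq'⟩ := edge 1
    simp only [add_zero] at *
    rw [show (1 + 1 : ZMod 5) = 2 from rfl] at p2 q2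
    rw [show (2 + 1 : ZMod 5) = 3 from rfl] at q3 hpq'
    rw [show (3 + 1 : ZMod 5) = 4 from rfl] at p4 hpq'
    rw [show (4 + 1 : ZMod 5) = 0 from rfl] at p0 q0
    have c01 : H.Adj (c 0) (c 1) := (hc _ _).2 (by decide)
    have c12 : H.Adj (c 1) (c 2) := (hc _ _).2 (by decide)
    have c04 : H.Adj (c 0) (c 4) := (hc _ _).2 (by decide)
    have c02 : ¬ H.Adj (c 0) (c 2) := fun h => absurd ((hc _ _).1 h) (by decide)
    have c03 : ¬ H.Adj (c 0) (c 3) := fun h => absurd ((hc _ _).1 h) (by decide)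
    have c14 : ¬ H.Adj (c 1) (c 4) := fun h => absurd ((hc _ _).1 h) (by decide)
    have ap : ¬ H.Adj a p := fun h => hK4 a p _ _ h a0 a4 p0 p4 c04
    have bq : ¬ H.Adj b q := fun h => hK4 b q _ _ h b1 b2 q1 q2 c12
    have bp : ¬ H.Adj b p := fun h => hK4 b p _ _ h b0 b1 p0 p1 c01
    have q4 : H.Adj q (c 4) := by
      by_contra q4
      exact hbull (c 0) (c 1) b (c 4) q c01 b0.symm b1.symm c04 q1.symm (fun h => q0 h.symm) c14
        b4 bq (fun h => q4 h.symm)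
    have a2 : H.Adj a (c 2) := by
      by_contra a2
      exact hbull (c 1) (c 0) p (c 2) a c01.symm p1.symm p0.symm c12 a0.symm (fun h => a1 h.symm)
        c02 p2 (fun h => ap h.symm) (fun h => a2 h.symm)
    exact hbull a (c 0) b (c 3) p a0 hab b0.symm a3 p0.symm ap c03
      (fun h => hab' ⟨a2, h⟩) bp (fun h => hpq' ⟨h.symm, q4⟩)
  · have : NeZero n := ⟨by omega⟩
    obtain ⟨x, y, hx, hy, hxy, hvx, hvy⟩ := exists_edge_nonadj hK4 (hv 0) (hno (c 0))
    obtain ⟨j, hj⟩ := missing_consecutive hbull hn hv hc hvx hx.symm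
    obtain ⟨k, hk⟩ := missing_consecutive hbull hn hv hc hvy hy.symm
    -- Each of `x`, `y` excludes at most three of the hole edges `c i c (i + 1)`, and `6 < n`.
    obtain ⟨i, hi⟩ : ∃ i : ZMod n, i ∉ ({j - 1, j, j + 1, k - 1, k, k + 1} : Finset (ZMod n)) := by
      by_contra hall
      push Not at hall
      have h1 := Finset.card_le_card (fun i _ => hall i : Finset.univ ⊆ _)
      rw [Finset.card_univ, ZMod.card] at h1
      exact absurd (h1.trans Finset.card_le_six) (by omega)
    simp only [Finset.mem_insert, Finset.mem_singleton, not_or] at hi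
    obtain ⟨i1, i2, i3, i4, i5, i6⟩ := hi
    have adj : ∀ (u : V) (l : ZMod n), (∀ i, ¬ H.Adj u (c i) → i = l ∨ i = l + 1) →
        i ≠ l - 1 → i ≠ l → i ≠ l + 1 → H.Adj u (c i) ∧ H.Adj u (c (i + 1)) := by
      intro u l hl e1 e2 e3
      constructor <;> by_contra hcon <;> rcases hl _ hcon with h | h
      · exact e2 h
      · exact e3 h
      · exact e1 (by linear_combination h)
      · exact e2 (by linear_combination h)
    obtain ⟨x1, x2⟩ := adj x j hj i1 i2 i3
    obtain ⟨y1, y2⟩ := adj y k hk i4 i5 i6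
    exact hK4 x y _ _ hxy x1 x2 y1 y2 ((hc _ _).2 (Or.inl rfl))

end Wheel

/-! ### Perfection of co-bipartite graphs with an isolated vertex -/

section Perfect

lemma card_le_cliqueNumOn {U : Type*} [Finite U] (K : SimpleGraph U) (t : Set U) (s : Finset U)
    (hs : ↑s ⊆ t) (hcl : K.IsClique (s : Set U)) : s.card ≤ cliqueNumOn K t := by
  have := Fintype.ofFinite U
  apply le_csSup
  · refine ⟨Fintype.card U, ?_⟩
    rintro n ⟨s, _, h⟩
    rw [← h.card_eq]
    exact Finset.card_le_univ s
  · exact ⟨s, hs, hcl, rfl⟩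

lemma exists_clique_cliqueNumOn {U : Type*} [Finite U] (K : SimpleGraph U) (t : Set U) :
    ∃ s : Finset U, ↑s ⊆ t ∧ K.IsNClique (cliqueNumOn K t) s := by
  have := Fintype.ofFinite U
  apply Nat.sSup_mem (s := {n | ∃ s : Finset U, ↑s ⊆ t ∧ K.IsNClique n s})
  · exact ⟨0, ∅, by simp, by simp [SimpleGraph.isNClique_iff]⟩
  · refine ⟨Fintype.card U, ?_⟩
    rintro n ⟨s, _, h⟩
    rw [← h.card_eq]
    exact Finset.card_le_univ s

/-- If `v` is isolated and the remaining vertices are covered by the two cliques `f = true` and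
`f = false`, then the graph is perfect. The second clique `B` receives distinct colours, `d` further
colours are added to reach the clique number `ω`, and Hall's theorem assigns distinct colours to the
first clique `A`, where `a ∈ A` may share the colour of `b ∈ B` only if they are not adjacent. -/
lemma isPerfect_of_cobipartite {U : Type*} [Finite U] (K : SimpleGraph U) (v : U)
    (hv : ∀ x, ¬ K.Adj v x) (f : U → Bool)
    (hf : ∀ x y, x ≠ v → y ≠ v → x ≠ y → f x = f y → K.Adj x y) : IsPerfect K := by
  classical
  have := Fintype.ofFinite U
  intro t
  apply le_antisymm
  · apply SimpleGraph.Colorable.chromaticNumber_le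
    rcases t.eq_empty_or_nonempty with rfl | ⟨x₀, hx₀⟩
    · exact ⟨SimpleGraph.Coloring.mk (fun x => absurd x.2 (Set.notMem_empty _))
        (fun {x} => absurd x.2 (Set.notMem_empty _))⟩
    set ω := cliqueNumOn K t with hω
    have hω1 : 1 ≤ ω := by
      simpa using card_le_cliqueNumOn K t {x₀} (by simpa using hx₀) (by simp)
    set A : Finset U := Finset.univ.filter (fun x => x ∈ t ∧ x ≠ v ∧ f x = true) with hA
    set B : Finset U := Finset.univ.filter (fun x => x ∈ t ∧ x ≠ v ∧ f x = false) with hB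
    have hBω : B.card ≤ ω := by
      apply card_le_cliqueNumOn K t B
      · intro x hx
        exact (Finset.mem_filter.1 hx).2.1
      · intro x hx y hy hxy
        obtain ⟨-, -, hxv, hx⟩ := Finset.mem_filter.1 hx
        obtain ⟨-, -, hyv, hy⟩ := Finset.mem_filter.1 hy
        exact hf x y hxv hyv hxy (hx.trans hy.symm)
    set d := ω - B.card with hd
    let N : A → Finset (U ⊕ Fin d) := fun a =>
      (B.filter (fun b => ¬ K.Adj a b)).disjSum Finset.univ
    have hall : ∀ S : Finset A, S.card ≤ (S.biUnion N).card := by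
      intro S
      rcases S.eq_empty_or_nonempty with rfl | ⟨a₀, ha₀⟩
      · simp
      have hsub : (B.filter (fun b => ∃ a ∈ S, ¬ K.Adj a b)).disjSum (Finset.univ : Finset (Fin d))
          ⊆ S.biUnion N := by
        intro x hx
        rw [Finset.mem_biUnion]
        rcases x with x | x
        · simp only [Finset.inl_mem_disjSum, Finset.mem_filter] at hx
          obtain ⟨hxB, a, haS, hax⟩ := hx
          exact ⟨a, haS, by simp [N, hxB, hax]⟩
        · exact ⟨a₀, ha₀, by simp [N]⟩
      refine le_trans ?_ (Finset.card_le_card hsub)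
      rw [Finset.card_disjSum, Finset.card_univ, Fintype.card_fin]
      have hsplit := Finset.card_filter_add_card_filter_not (s := B) (fun b => ∃ a ∈ S, ¬ K.Adj a b)
      -- Hall's condition: `S` with the vertices of `B` complete to `S` is a clique, of size at
      -- most `ω`.
      have hclq := card_le_cliqueNumOn K t
        (S.map (Function.Embedding.subtype _) ∪ B.filter (fun b => ¬ ∃ a ∈ S, ¬ K.Adj a b)) ?_ ?_
      · rw [Finset.card_union_of_disjoint, Finset.card_map] at hclq
        · omega
        · rw [Finset.disjoint_left]
          intro x hx hx'
          simp [hA, hB] at hx hx'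
          simp [hx'.1.2.2] at hx
      · intro x hx
        simp [hA, hB] at hx
        tauto
      · have hAA : ∀ a ∈ S, (a : U) ∈ t ∧ (a : U) ≠ v ∧ f a = true := by
          intro a _
          exact (Finset.mem_filter.1 a.2).2
        intro x hx y hy hxy
        rw [Finset.mem_coe, Finset.mem_union, Finset.mem_map, Finset.mem_filter] at hx hy
        rcases hx with ⟨a, haS, rfl⟩ | ⟨hxB, hx⟩ <;> rcases hy with ⟨b, hbS, rfl⟩ | ⟨hyB, hy⟩
        · exact hf _ _ (hAA a haS).2.1 (hAA b hbS).2.1 hxy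
            ((hAA a haS).2.2.trans (hAA b hbS).2.2.symm)
        · push Not at hy
          exact hy a haS
        · push Not at hx
          exact (hx b hbS).symm
        · simp only [hB, Finset.mem_filter, Finset.mem_univ, true_and] at hxB hyB
          exact hf _ _ hxB.2.1 hyB.2.1 hxy (hxB.2.2.trans hyB.2.2.symm)
    obtain ⟨g, hginj, hg⟩ := (Finset.all_card_le_biUnion_card_iff_exists_injective N).1 hall
    set D : Finset (U ⊕ Fin d) := B.disjSum Finset.univ with hD
    have hDcard : D.card = ω := by
      rw [hD, Finset.card_disjSum, Finset.card_univ, Fintype.card_fin]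
      omega
    obtain ⟨e, he⟩ : D.Nonempty := by
      rw [← Finset.card_pos]
      omega
    have hgD : ∀ a, g a ∈ D := by
      intro a
      have := hg a
      revert this
      rcases g a with x | x
      · simp only [N, hD, Finset.inl_mem_disjSum, Finset.mem_filter]
        exact fun h => h.1
      · simp [hD]
    have memA : ∀ x : t, x.1 ≠ v → f x = true → x.1 ∈ A := fun x h1 h2 => by
      simp [hA, h1, h2]
    have memB : ∀ x : t, x.1 ≠ v → f x = false → x.1 ∈ B := fun x h1 h2 => by
      simp [hB, h1, h2]
    let col : t → D := fun x =>
      if h : x.1 = v then ⟨e, he⟩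
      else if h' : f x = true then ⟨g ⟨x, memA x h h'⟩, hgD _⟩
      else ⟨Sum.inl x.1, by
        rw [hD, Finset.inl_mem_disjSum]
        exact memB x h (by simpa using h')⟩
    have hmix : ∀ x y : t, x.1 ≠ v → y.1 ≠ v → f x = true → f y = false → K.Adj x y →
        col x ≠ col y := by
      intro x y hxv hyv hx hy hxy h
      simp only [col, hxv, hyv, hx, hy, dif_pos, dif_neg, not_false_eq_true, Subtype.mk.injEq,
        Bool.false_eq_true] at h
      have := hg ⟨x, memA x hxv hx⟩
      rw [h] at this
      simp only [N, Finset.inl_mem_disjSum, Finset.mem_filter] at this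
      exact this.2 hxy
    have hcol : ∀ x y : t, K.Adj x y → col x ≠ col y := by
      intro x y hxy
      have hxv : x.1 ≠ v := fun h => hv y (h ▸ hxy)
      have hyv : y.1 ≠ v := fun h => hv x (h ▸ hxy.symm)
      rcases hx : f x with _ | _ <;> rcases hy : f y with _ | _
      · intro h
        simp only [col, hxv, hyv, hx, hy, dif_neg, not_false_eq_true, Subtype.mk.injEq,
          Bool.false_eq_true, Sum.inl.injEq] at h
        exact hxy.ne h
      · exact (hmix y x hyv hxv hy hx hxy.symm).symm
      · exact hmix x y hxv hyv hx hy hxy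
      · intro h
        simp only [col, hxv, hyv, hx, hy, dif_pos, dif_neg, not_false_eq_true,
          Subtype.mk.injEq] at h
        have := hginj h
        simp only [Subtype.mk.injEq] at this
        exact hxy.ne this
    have hfin := (SimpleGraph.Coloring.mk (G := K.induce t) col
      (fun {x y} hxy => hcol x y hxy)).colorable
    rwa [Fintype.card_coe, hDcard] at hfin
  · obtain ⟨s, hs, hcl⟩ := exists_clique_cliqueNumOn K t
    have h1 : (K.induce t).IsClique (↑(s.subtype (· ∈ t)) : Set t) := by
      intro x hx y hy hxy
      simp at hx hy
      exact hcl.1 hx hy (fun h => hxy (Subtype.ext h))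
    have h2 := h1.card_le_chromaticNumber
    have h3 : (s.subtype (· ∈ t)).card = cliqueNumOn K t := by
      rw [Finset.card_subtype, Finset.filter_true_of_mem (fun x hx => hs hx), hcl.card_eq]
    rwa [h3] at h2

end Perfect

/-! ### Clique weights -/

section Weights

lemma wCliqueNumOn_nbhd_lt {V : Type*} [Finite V] (G : SimpleGraph V) (w : V → ℕ) (s W : Set V)
    (v : V) (hv : v ∈ s) (hw : 0 < w v) (hWs : W ⊆ s) (hadj : ∀ x ∈ W, G.Adj v x) :
    wCliqueNumOn G w W < wCliqueNumOn G w s := by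
  classical
  have := Fintype.ofFinite V
  have hbdd : ∀ s : Set V, BddAbove {n | ∃ t : Finset V, ↑t ⊆ s ∧ G.IsClique (↑t : Set V) ∧
      ∑ v ∈ t, w v = n} := by
    intro s
    refine ⟨∑ v, w v, ?_⟩
    rintro n ⟨t, _, _, rfl⟩
    exact Finset.sum_le_sum_of_subset (Finset.subset_univ t)
  obtain ⟨t, htW, htc, hts⟩ := Nat.sSup_mem (s := {n | ∃ t : Finset V, ↑t ⊆ W ∧
    G.IsClique (↑t : Set V) ∧ ∑ v ∈ t, w v = n}) ⟨0, ∅, by simp⟩ (hbdd W)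
  have hvt : v ∉ t := fun h => G.irrefl (hadj v (htW h))
  have hle : ∑ x ∈ insert v t, w x ≤ wCliqueNumOn G w s := by
    apply le_csSup (hbdd s)
    refine ⟨insert v t, ?_, ?_, rfl⟩
    · rw [Finset.coe_insert]
      exact Set.insert_subset hv (htW.trans hWs)
    · rw [Finset.coe_insert]
      exact htc.insert (fun x hx _ => hadj x (htW hx))
  rw [Finset.sum_insert hvt] at hle
  have : wCliqueNumOn G w W = ∑ x ∈ t, w x := hts.symm
  omega

lemma wCliqueNumOn_one {V : Type*} (G : SimpleGraph V) (s : Set V) :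
    wCliqueNumOn G (fun _ => 1) s = cliqueNumOn G s := by
  unfold wCliqueNumOn cliqueNumOn
  simp [SimpleGraph.isNClique_iff]

lemma PerfectlyWeightDivisible.perfectlyDivisible {V : Type*} {G : SimpleGraph V}
    (h : PerfectlyWeightDivisible G) : PerfectlyDivisible G := by
  intro s hs
  obtain ⟨P, W, h1, h2, h3, h4⟩ := h (fun _ => 1) (fun _ => Nat.one_pos) s hs
  rw [wCliqueNumOn_one, wCliqueNumOn_one] at h4
  exact ⟨P, W, h1, h2, h3, h4⟩

end Weights

/-! ### Passing to the complement -/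

section Translation

variable {V : Type*} {G : SimpleGraph V}

lemma compl_noK4 (h4K1 : IsFree G (⊥ : SimpleGraph (Fin 4))) (a b c d : V)
    (hab : Gᶜ.Adj a b) (hac : Gᶜ.Adj a c) (had : Gᶜ.Adj a d) (hbc : Gᶜ.Adj b c)
    (hbd : Gᶜ.Adj b d) (hcd : Gᶜ.Adj c d) : False := by
  have key : ∀ i j : Fin 4, i ≠ j → Gᶜ.Adj (![a, b, c, d] i) (![a, b, c, d] j) := by
    intro i j hij
    fin_cases i <;> fin_cases j <;>
      first
      | exact absurd rfl hij
      | assumption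
      | exact SimpleGraph.Adj.symm (by assumption)
  refine h4K1 ⟨⟨![a, b, c, d], fun i j hij => ?_⟩, fun i j => ?_⟩
  · by_contra hne
    exact (key i j hne).ne hij
  · by_cases hij : i = j
    · subst hij
      simp
    · exact iff_of_false (key i j hij).2 (by simp)

/-- The complement of a bull is a bull: its triangle consists of the two pendant vertices and the
vertex of degree two. -/
lemma compl_noBull (hbull : IsFree G bull) (a b c d e : V)
    (hab : Gᶜ.Adj a b) (hac : Gᶜ.Adj a c) (hbc : Gᶜ.Adj b c) (had : Gᶜ.Adj a d)
    (hbe : Gᶜ.Adj b e) (hae : ¬ Gᶜ.Adj a e) (hbd : ¬ Gᶜ.Adj b d) (hcd : ¬ Gᶜ.Adj c d)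
    (hce : ¬ Gᶜ.Adj c e) (hde : ¬ Gᶜ.Adj d e) : False := by
  have nae : a ≠ e := by rintro rfl; exact hce hac.symm
  have nbd : b ≠ d := by rintro rfl; exact hcd hbc.symm
  have ncd : c ≠ d := by rintro rfl; exact hbd hbc
  have nce : c ≠ e := by rintro rfl; exact hae hac
  have nde : d ≠ e := by rintro rfl; exact hae had
  have adj : ∀ {x y}, x ≠ y → ¬ Gᶜ.Adj x y → G.Adj x y := by
    intro x y hne h
    by_contra hG
    exact h ⟨hne, hG⟩
  replace hae := adj nae hae
  replace hbd := adj nbd hbd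
  replace hcd := adj ncd hcd
  replace hce := adj nce hce
  replace hde := adj nde hde
  obtain ⟨nab, hab⟩ := hab
  obtain ⟨nac, hac⟩ := hac
  obtain ⟨nbc, hbc⟩ := hbc
  obtain ⟨nad, had⟩ := had
  obtain ⟨nbe, hbe⟩ := hbe
  refine hbull ⟨⟨![d, e, c, b, a], fun i j hij => ?_⟩, fun i j => ?_⟩
  · fin_cases i <;> fin_cases j <;> simp_all
  · change G.Adj (![d, e, c, b, a] i) (![d, e, c, b, a] j) ↔ bull.Adj i j
    have hab' := mt SimpleGraph.Adj.symm hab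
    have hac' := mt SimpleGraph.Adj.symm hac
    have hbc' := mt SimpleGraph.Adj.symm hbc
    have had' := mt SimpleGraph.Adj.symm had
    have hbe' := mt SimpleGraph.Adj.symm hbe
    fin_cases i <;> fin_cases j <;>
      simp [bull, hab, hac, hbc, had, hbe, hab', hac', hbc', had', hbe', hae, hbd, hcd, hce, hde,
        hae.symm, hbd.symm, hcd.symm, hce.symm, hde.symm]

end Translation

/-- Every (bull, 4K₁)-free graph is perfectly weight divisible, and hence
perfectly divisible. -/
theorem bull_fourKOne_free_perfectlyWeightDivisible {V : Type*} [Fintype V]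
    (G : SimpleGraph V) (hbull : IsFree G bull)
    (h4K1 : IsFree G (⊥ : SimpleGraph (Fin 4))) :
    PerfectlyWeightDivisible G ∧ PerfectlyDivisible G := by
  suffices h : PerfectlyWeightDivisible G from ⟨h, h.perfectlyDivisible⟩
  intro w hw s hs
  have : Nonempty s := hs.to_subtype
  obtain ⟨⟨v, hvs⟩, f, hf⟩ := exists_vertex_bipartite_nbhd (H := Gᶜ.induce s)
    (fun a b c d => compl_noK4 h4K1 (a : V) b c d)
    (fun a b c d e => compl_noBull hbull (a : V) b c d e)
  refine ⟨{x | x ∈ s ∧ ¬ G.Adj v x}, {x | x ∈ s ∧ G.Adj v x}, ?_, ?_, ?_, ?_⟩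
  · ext x
    simp only [Set.mem_union, Set.mem_ofPred_eq]
    tauto
  · ext x
    simp only [Set.mem_inter_iff, Set.mem_ofPred_eq, Set.mem_empty_iff_false]
    tauto
  · refine isPerfect_of_cobipartite _ ⟨v, hvs, G.irrefl⟩ (fun x => x.2.2)
      (fun x => f ⟨x, x.2.1⟩) ?_
    intro x y hx hy hxy hfxy
    by_contra hadj
    refine hf ⟨x, x.2.1⟩ ⟨y, y.2.1⟩ ⟨fun h => hx (Subtype.ext h.symm), x.2.2⟩
      ⟨fun h => hy (Subtype.ext h.symm), y.2.2⟩ ⟨fun h => hxy (Subtype.ext h), hadj⟩ hfxy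
  · exact wCliqueNumOn_nbhd_lt G w s _ v hvs (hw v) (fun x hx => hx.1) (fun x hx => hx.2)
end

section
/- Let H be one of the graphs house, hammer, diamond, and let 𝒞 be the class of (bull, H)-free graphs. Then 𝒞 is perfect-Pollyanna: for every hereditary class 𝒢 of graphs in which every triangle-free graph is 3-colorable, every graph in 𝒞 ∩ 𝒢 is perfectly divisible. -/
/-!
The proof shows the stronger property `WDiv`: for every positive vertex weight, the vertex set
splits into a perfect part and a part with smaller maximum clique weight. With weights, a
homogeneous set `X` can be contracted to a vertex carrying the maximum weight of a clique of `X`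
(`WDiv.of_module`), since substituting perfect graphs into perfect graphs preserves perfection
(`PerfOn.subst`). So only prime graphs `G` matter, and these may be taken connected and imperfect.

For prime `G` one finds a perfect set `P` such that every clique outside `P` extends to a larger
clique of `G` (`GoodPart`). If the non-neighbourhood of some vertex `v` is perfect, the complement
of the neighbourhood of `v` will do. Otherwise every vertex `v` has a minimally imperfect `G[C]` in
its non-neighbourhood. The key fact `no_centre` says that in a prime bull-free graph no vertex is
then complete to `C`. It uses only that `G[C]` is prime and not split (`Sturdy`), so that one may
pass to complements. Consequently:

* if `G` is hammer-free or house-free, then `G` has no triangle (`hammer_case`, `house_case`);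
* if `G` is diamond-free, then every triangle has a simplicial vertex (`diamond_case`), because
  otherwise two cliques cover `G` and some non-neighbourhood is a clique, hence perfect.

In all remaining cases the vertices that are not simplicial induce a triangle-free graph, which is
3-colourable by hypothesis. Two of the colour classes together with the simplicial vertices form a
perfect graph `P`, and the third colour class is stable, so that its cliques are not maximal
(`goodPart_of_simplicial`).
-/

open SimpleGraph

/-! ### Perfection and substitution -/

/-- `k` colours, encoded as naturals below `k`, colour the subgraph of `G` induced on `s`. -/
def ColOn {V : Type*} (G : SimpleGraph V) (s : Set V) (k : ℕ) : Prop :=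
  ∃ f : V → ℕ, (∀ v ∈ s, f v < k) ∧ ∀ u ∈ s, ∀ v ∈ s, G.Adj u v → f u ≠ f v

/-- `G[A]` is perfect: each `s ⊆ A` is `k`-colourable for some `k` that is the size of a clique
in `s`. This avoids the suprema in `IsPerfect`. -/
def PerfOn {V : Type*} (G : SimpleGraph V) (A : Set V) : Prop :=
  ∀ s ⊆ A, ∃ k, ColOn G s k ∧ ∃ t : Finset V, ↑t ⊆ s ∧ G.IsNClique k t

/-- `X` is a module of `G[s]`: every vertex of `s` outside `X` is complete or anticomplete
to `X`. -/
def ModuleIn {V : Type*} (G : SimpleGraph V) (s X : Set V) : Prop :=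
  X ⊆ s ∧ ∀ y ∈ s, y ∉ X → (∀ x ∈ X, G.Adj y x) ∨ (∀ x ∈ X, ¬ G.Adj y x)

/-- `G[s]` is prime: it has no homogeneous set, i.e. all its modules are trivial. -/
def PrimeOn {V : Type*} (G : SimpleGraph V) (s : Set V) : Prop :=
  ∀ X, ModuleIn G s X → X.Subsingleton ∨ X = s

/-- `G[Z]` is connected, in cut form. -/
def ConnOn {V : Type*} (G : SimpleGraph V) (Z : Set V) : Prop :=
  ∀ Y ⊆ Z, Y.Nonempty → Y ≠ Z → ∃ y ∈ Y, ∃ z ∈ Z, z ∉ Y ∧ G.Adj y z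

/-- `G[C]` is minimally imperfect. -/
def MinImp {V : Type*} (G : SimpleGraph V) (C : Set V) : Prop :=
  ¬ PerfOn G C ∧ ∀ D, D ⊆ C → D ≠ C → PerfOn G D

section
variable {V : Type*} {G : SimpleGraph V}

theorem ColOn.card_le {s : Set V} {k : ℕ} (h : ColOn G s k) {t : Finset V} (ht : ↑t ⊆ s)
    (hc : G.IsClique (↑t : Set V)) : t.card ≤ k := by
  classical
  obtain ⟨f, h1, h2⟩ := h
  have := Finset.card_le_card_of_injOn (s := t) (t := Finset.range k) f
    (fun v hv => by simpa using h1 v (ht hv))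
    (fun u hu v hv huv => by
      by_contra hne
      exact h2 u (ht hu) v (ht hv) (hc hu hv hne) huv)
  simpa using this

/-- A clique with as many vertices as there are colours meets every colour class. -/
theorem clique_meets {s : Set V} {k : ℕ} {f : V → ℕ} (h1 : ∀ v ∈ s, f v < k)
    (h2 : ∀ u ∈ s, ∀ v ∈ s, G.Adj u v → f u ≠ f v) {t : Finset V} (ht : ↑t ⊆ s)
    (hc : G.IsClique (↑t : Set V)) (hk : k ≤ t.card) {i : ℕ} (hi : i < k) :
    ∃ v ∈ t, f v = i := by
  classical
  have hinj : Set.InjOn f (t : Set V) := fun u hu v hv huv => by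
    by_contra hne
    exact h2 u (ht hu) v (ht hv) (hc hu hv hne) huv
  have himg : t.image f = Finset.range k := by
    apply Finset.eq_of_subset_of_card_le
    · intro j hj
      obtain ⟨v, hv, rfl⟩ := Finset.mem_image.1 hj
      simpa using h1 v (ht hv)
    · rw [Finset.card_image_of_injOn hinj]; simpa using hk
  have : i ∈ t.image f := by rw [himg]; simpa using hi
  simpa using this

theorem PerfOn.mono {A B : Set V} (h : PerfOn G B) (hAB : A ⊆ B) : PerfOn G A :=
  fun s hs => h s (hs.trans hAB)

theorem exists_minImp [Finite V] {A : Set V} (h : ¬ PerfOn G A) : ∃ C ⊆ A, MinImp G C := by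
  obtain ⟨C, hC, hmin⟩ := Set.Finite.exists_minimal (s := {C : Set V | C ⊆ A ∧ ¬ PerfOn G C})
    (Set.toFinite _) ⟨A, subset_rfl, h⟩
  refine ⟨C, hC.1, hC.2, fun D hD hne => ?_⟩
  by_contra hn
  exact hne (hD.antisymm (hmin ⟨hD.trans hC.1, hn⟩ hD))

/-- Adding a simplicial vertex preserves perfection. -/
theorem PerfOn.simplicial {A : Set V} {v : V} (h : PerfOn G (A \ {v}))
    (hv : ∀ x ∈ A, ∀ y ∈ A, G.Adj v x → G.Adj v y → x ≠ y → G.Adj x y) [Finite V] :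
    PerfOn G A := by
  classical
  intro s hs
  by_cases hvs : v ∈ s
  swap
  · exact h s (fun x hx => ⟨hs hx, fun hxv => hvs (hxv ▸ hx)⟩)
  obtain ⟨k, ⟨f, hf1, hf2⟩, t, ht, htc⟩ := h (s \ {v}) (fun x hx => ⟨hs hx.1, hx.2⟩)
  let N : Finset V := (Set.toFinite {x | x ∈ s ∧ G.Adj v x}).toFinset
  have hN : ∀ x, x ∈ N ↔ x ∈ s ∧ G.Adj v x := fun x => by simp [N]
  have hNc : G.IsClique (↑N : Set V) := fun x hx y hy hxy =>
    hv x (hs ((hN x).1 hx).1) y (hs ((hN y).1 hy).1) ((hN x).1 hx).2 ((hN y).1 hy).2 hxy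
  have hNle : N.card ≤ k := ColOn.card_le ⟨f, hf1, hf2⟩
    (fun x hx => ⟨((hN x).1 hx).1, fun h => by
      have := ((hN x).1 hx).2
      rw [h] at this; exact G.loopless.irrefl v this⟩) hNc
  have key : ∀ m c, k ≤ m → c < m → (∀ x ∈ N, f x ≠ c) → ColOn G s m := by
    intro m c hkm hcm hc
    refine ⟨fun x => if x = v then c else f x, fun x hx => ?_, fun x hx y hy hxy => ?_⟩
    · by_cases hxv : x = v
      · simpa [hxv] using hcm
      · simpa [hxv] using (hf1 x ⟨hx, hxv⟩).trans_le hkm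
    · by_cases hxv : x = v
      · have hyv : y ≠ v := fun h => hxy.ne (hxv.trans h.symm)
        subst hxv
        simpa [hyv] using (hc y ((hN y).2 ⟨hy, hxy⟩)).symm
      · by_cases hyv : y = v
        · subst hyv
          simpa [hxv] using (hc x ((hN x).2 ⟨hx, hxy.symm⟩))
        · simpa [hxv, hyv] using hf2 x ⟨hx, hxv⟩ y ⟨hy, hyv⟩ hxy
  by_cases hlt : N.card < k
  · obtain ⟨c, hc, hcn⟩ : ∃ c ∈ Finset.range k, c ∉ N.image f :=
      Finset.exists_mem_notMem_of_card_lt_card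
        (by simpa using Finset.card_image_le.trans_lt hlt)
    exact ⟨k, key k c le_rfl (by simpa using hc)
      (fun x hx h => hcn (Finset.mem_image.2 ⟨x, hx, h⟩)), t,
      fun x hx => (ht hx).1, htc⟩
  · have hNk : N.card = k := by omega
    have hvN : v ∉ N := fun h => G.loopless.irrefl v ((hN v).1 h).2
    refine ⟨k + 1, key (k + 1) k (by omega) (by omega) (fun x hx => ?_), insert v N, ?_, ?_, ?_⟩
    · refine (hf1 x ⟨((hN x).1 hx).1, fun h => ?_⟩).ne
      exact hvN (h ▸ hx)
    · intro x hx
      rcases Finset.mem_insert.1 (Finset.mem_coe.1 hx) with rfl | hx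
      · exact hvs
      · exact ((hN x).1 hx).1
    · rw [Finset.coe_insert]
      exact hNc.insert (fun b hb _ => ((hN b).1 hb).2)
    · rw [Finset.card_insert_of_notMem hvN, hNk]

theorem perfOn_of_bip {A : Set V} (S : Set V)
    (h1 : ∀ x ∈ A, ∀ y ∈ A, x ∈ S → y ∈ S → ¬ G.Adj x y)
    (h2 : ∀ x ∈ A, ∀ y ∈ A, x ∉ S → y ∉ S → ¬ G.Adj x y) : PerfOn G A := by
  classical
  intro s hs
  by_cases he : ∃ x ∈ s, ∃ y ∈ s, G.Adj x y
  · obtain ⟨x, hx, y, hy, hxy⟩ := he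
    refine ⟨2, ⟨fun v => if v ∈ S then 0 else 1, fun v _ => by dsimp only; split_ifs <;> omega,
      fun u hu v hv huv => ?_⟩, {x, y}, ?_, ?_⟩
    · have a1 := h1 u (hs hu) v (hs hv)
      have a2 := h2 u (hs hu) v (hs hv)
      by_cases hu' : u ∈ S <;> by_cases hv' : v ∈ S <;> simp_all
    · intro z hz
      rcases (by simpa using hz : z = x ∨ z = y) with rfl | rfl <;> assumption
    · constructor
      · simp [SimpleGraph.isClique_iff, Set.Pairwise, hxy, hxy.symm]
      · exact Finset.card_pair hxy.ne
  · push Not at he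
    rcases s.eq_empty_or_nonempty with rfl | ⟨x, hx⟩
    · exact ⟨0, ⟨fun _ => 0, by simp, by simp⟩, ∅, by simp, by simp [isNClique_iff]⟩
    · exact ⟨1, ⟨fun _ => 0, by simp, fun u hu v hv huv => (he u hu v hv huv).elim⟩, {x},
        by simpa using hx, by simp [isNClique_iff]⟩

/-- Lovász's substitution lemma: if `X` is a module, `Px ⊆ X`, and both `G[Px]` and
`G[P' ∪ {x}]` (with `P'` disjoint from `X`, `x ∈ X`) are perfect, then so is `G[P' ∪ Px]`. The
proof finds a stable set meeting all maximum cliques. -/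
theorem PerfOn.subst [Finite V] {s X P' Px : Set V} {x : V} (hX : ModuleIn G s X)
    (hP's : P' ⊆ s) (hP'X : ∀ y ∈ P', y ∉ X) (hPx : Px ⊆ X) (hx : x ∈ X)
    (h1 : PerfOn G (insert x P')) (h2 : PerfOn G Px) : PerfOn G (P' ∪ Px) := by
  classical
  have main : ∀ n, ∀ t ⊆ P' ∪ Px, t.ncard = n →
      ∃ k, ColOn G t k ∧ ∃ q : Finset V, ↑q ⊆ t ∧ G.IsNClique k q := by
    intro n
    induction n using Nat.strong_induction_on with
    | _ n ih =>
    intro t ht htn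
    by_cases hne : ∃ y ∈ t, y ∈ X
    swap
    · push Not at hne
      exact h1 t (fun y hy => by
        rcases ht hy with h | h
        · exact Or.inr h
        · exact (hne y hy (hPx h)).elim)
    obtain ⟨y0, hy0t, hy0X⟩ := hne
    have htP' : ∀ y ∈ t, y ∉ X → y ∈ P' := fun y hy hyX =>
      (ht hy).elim id (fun h => (hyX (hPx h)).elim)
    have htPx : ∀ y ∈ t, y ∈ X → y ∈ Px := fun y hy hyX =>
      (ht hy).elim (fun h => (hP'X y h hyX).elim) id
    have hmod : ∀ y ∈ t, y ∉ X → ∀ a ∈ X, ∀ b ∈ X, G.Adj y a → G.Adj y b := by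
      intro y hy hyX a ha b hb hab
      rcases hX.2 y (hP's (htP' y hy hyX)) hyX with h | h
      · exact h b hb
      · exact (h a ha hab).elim
    obtain ⟨k, ⟨f, hf1, hf2⟩, q, hq, hqc⟩ := h1 (insert x (t \ X)) (by
      intro y hy
      rcases hy with rfl | hy
      · exact Or.inl rfl
      · exact Or.inr (htP' y hy.1 hy.2))
    obtain ⟨m, ⟨g, hg1, hg2⟩, r, hr, hrc⟩ := h2 (t ∩ X) (fun y hy => htPx y hy.1 hy.2)
    have hm : 0 < m := (Nat.zero_le _).trans_lt (hg1 y0 ⟨hy0t, hy0X⟩)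
    have hrpos : r.Nonempty := by
      rw [← Finset.card_pos, hrc.card_eq]; exact hm
    obtain ⟨z0, hz0, hz0g⟩ := clique_meets hg1 hg2 hr hrc.isClique hrc.card_eq.ge hm
    -- the stable set: the colour class of `x`, with `x` replaced by a colour class of `t ∩ X`
    let S : Set V := {y | y ∈ t ∧ ((y ∉ X ∧ f y = f x) ∨ (y ∈ X ∧ g y = 0))}
    have hSst : ∀ u ∈ S, ∀ v ∈ S, ¬ G.Adj u v := by
      rintro u ⟨hut, hu⟩ v ⟨hvt, hv⟩ huv
      rcases hu with ⟨hu1, hu2⟩ | ⟨hu1, hu2⟩ <;> rcases hv with ⟨hv1, hv2⟩ | ⟨hv1, hv2⟩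
      · exact hf2 u (Or.inr ⟨hut, hu1⟩) v (Or.inr ⟨hvt, hv1⟩) huv (hu2.trans hv2.symm)
      · exact hf2 u (Or.inr ⟨hut, hu1⟩) x (Or.inl rfl) (hmod u hut hu1 v hv1 x hx huv) hu2
      · exact hf2 v (Or.inr ⟨hvt, hv1⟩) x (Or.inl rfl) (hmod v hvt hv1 u hu1 x hx huv.symm) hv2
      · exact hg2 u ⟨hut, hu1⟩ v ⟨hvt, hv1⟩ huv (hu2.trans hv2.symm)
    have hlt : (t \ S).ncard < n := by
      rw [← htn]
      refine Set.ncard_lt_ncard ⟨Set.sdiff_subset, fun h => ?_⟩ (Set.toFinite _)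
      exact (h (hr hz0).1).2 ⟨(hr hz0).1, Or.inr ⟨(hr hz0).2, hz0g⟩⟩
    obtain ⟨k', ⟨c, hc1, hc2⟩, K, hK, hKc⟩ := ih _ hlt (t \ S) (Set.sdiff_subset.trans ht) rfl
    have hcol : ColOn G t (k' + 1) := by
      refine ⟨fun y => if y ∈ S then k' else c y, fun y hy => ?_, fun u hu v hv huv => ?_⟩
      · by_cases hyS : y ∈ S
        · simp [hyS]
        · simpa [hyS] using (hc1 y ⟨hy, hyS⟩).trans (Nat.lt_succ_self _)
      · by_cases huS : u ∈ S <;> by_cases hvS : v ∈ S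
        · exact (hSst u huS v hvS huv).elim
        · simpa [huS, hvS] using (hc1 v ⟨hv, hvS⟩).ne'
        · simpa [huS, hvS] using (hc1 u ⟨hu, huS⟩).ne
        · simpa [huS, hvS] using hc2 u ⟨hu, huS⟩ v ⟨hv, hvS⟩ huv
    -- `K` misses the stable set, so it can be beaten by another clique of `t`
    suffices hbig : ∃ q' : Finset V, ↑q' ⊆ t ∧ G.IsClique (↑q' : Set V) ∧ k' + 1 ≤ q'.card by
      obtain ⟨q', hq't, hq'c, hq'k⟩ := hbig
      exact ⟨k' + 1, hcol, q', hq't, hq'c, le_antisymm (hcol.card_le hq't hq'c) hq'k⟩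
    have hKt : ∀ y ∈ K, y ∈ t := fun y hy => (hK hy).1
    -- swapping the part of a clique inside `X`
    have hswap : ∀ L : Finset V, (∀ y ∈ L, y ∈ t ∧ y ∉ X) → G.IsClique (↑L : Set V) →
        ∀ y1 ∈ X, (∀ y ∈ L, G.Adj y y1) → ∃ q' : Finset V, ↑q' ⊆ t ∧
          G.IsClique (↑q' : Set V) ∧ q'.card = L.card + m := by
      intro L hL hLc y1 hy1 hLy
      refine ⟨L ∪ r, ?_, ?_, ?_⟩
      · intro y hy
        rcases Finset.mem_union.1 (Finset.mem_coe.1 hy) with h | h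
        · exact (hL y h).1
        · exact (hr h).1
      · intro a ha b hb hab
        rcases Finset.mem_union.1 (Finset.mem_coe.1 ha) with h | h <;>
        rcases Finset.mem_union.1 (Finset.mem_coe.1 hb) with h' | h'
        · exact hLc h h' hab
        · exact hmod a (hL a h).1 (hL a h).2 y1 hy1 b (hr h').2 (hLy a h)
        · exact (hmod b (hL b h').1 (hL b h').2 y1 hy1 a (hr h).2 (hLy b h')).symm
        · exact hrc.isClique h h' hab
      · rw [Finset.card_union_of_disjoint, hrc.card_eq]
        rw [Finset.disjoint_left]
        exact fun a ha har => (hL a ha).2 (hr har).2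
    by_cases hKX : ∃ y1 ∈ K, y1 ∈ X
    · obtain ⟨y1, hy1K, hy1X⟩ := hKX
      obtain ⟨q', hq't, hq'c, hq'k⟩ := hswap (K.filter (· ∉ X))
        (fun y hy => ⟨hKt y (Finset.mem_filter.1 hy).1, (Finset.mem_filter.1 hy).2⟩)
        (hKc.isClique.subset (by intro y hy; exact (Finset.mem_filter.1 hy).1)) y1 hy1X
        (fun y hy => hKc.isClique (Finset.mem_filter.1 hy).1 hy1K
          (fun h => (Finset.mem_filter.1 hy).2 (h ▸ hy1X)))
      refine ⟨q', hq't, hq'c, ?_⟩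
      have hsplit := Finset.card_filter_add_card_filter_not (s := K) (p := (· ∈ X))
      have hKm : (K.filter (· ∈ X)).card < m := by
        by_contra hge
        obtain ⟨v, hv, hvg⟩ := clique_meets hg1 hg2 (t := K.filter (· ∈ X))
          (fun y hy => ⟨hKt y (Finset.mem_filter.1 hy).1, (Finset.mem_filter.1 hy).2⟩)
          (hKc.isClique.subset (by intro y hy; exact (Finset.mem_filter.1 hy).1))
          (not_lt.1 hge) hm
        have hv' := Finset.mem_filter.1 hv
        exact (hK hv'.1).2 ⟨hKt v hv'.1, Or.inr ⟨hv'.2, hvg⟩⟩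
      have := hKc.card_eq
      omega
    · push Not at hKX
      have hKk : k' < k := by
        by_contra hge
        obtain ⟨v, hv, hvf⟩ := clique_meets hf1 hf2 (t := K)
          (fun y hy => Or.inr ⟨hKt y hy, hKX y hy⟩) hKc.isClique
          (by rw [hKc.card_eq]; exact not_lt.1 hge) (hf1 x (Or.inl rfl))
        exact (hK hv).2 ⟨hKt v hv, Or.inl ⟨hKX v hv, hvf⟩⟩
      by_cases hxq : x ∈ q
      · have hqx : ∀ y ∈ q.erase x, y ∈ t ∧ y ∉ X := fun y hy =>
          (hq (Finset.mem_erase.1 hy).2).resolve_left (Finset.mem_erase.1 hy).1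
        obtain ⟨q', hq't, hq'c, hq'k⟩ := hswap (q.erase x) hqx
          (hqc.isClique.subset (by intro y hy; exact (Finset.mem_erase.1 hy).2)) x hx
          (fun y hy => hqc.isClique (Finset.mem_erase.1 hy).2 hxq (Finset.mem_erase.1 hy).1)
        refine ⟨q', hq't, hq'c, ?_⟩
        have := Finset.card_erase_add_one hxq
        have := hqc.card_eq
        omega
      · refine ⟨q, fun y hy => ?_, hqc.isClique, by rw [hqc.card_eq]; omega⟩
        rcases hq hy with h | h
        · exact (hxq (h ▸ hy)).elim
        · exact h.1
  intro t ht
  exact main _ t ht rfl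

end

/-! ### Weights and homogeneous sets -/

/-- `G[s]` is perfectly weight divisible for the single vertex set `s`, with the inequality of
clique weights spelled out. -/
def WDiv {V : Type*} (G : SimpleGraph V) (s : Set V) : Prop :=
  ∀ w : V → ℕ, (∀ v, 0 < w v) → ∃ P W : Set V, P ∪ W = s ∧ Disjoint P W ∧ PerfOn G P ∧
    ∀ K : Finset V, ↑K ⊆ W → G.IsClique (↑K : Set V) →
      ∃ K' : Finset V, ↑K' ⊆ s ∧ G.IsClique (↑K' : Set V) ∧ ∑ v ∈ K, w v < ∑ v ∈ K', w v

/-- A partition of `s` into a perfect part and a part none of whose cliques is maximal in `s`.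
Such a partition serves all positive weights simultaneously. -/
def GoodPart {V : Type*} (G : SimpleGraph V) (s : Set V) : Prop :=
  ∃ P W : Set V, P ∪ W = s ∧ Disjoint P W ∧ PerfOn G P ∧
    ∀ K : Finset V, ↑K ⊆ W → G.IsClique (↑K : Set V) → ∃ v ∈ s, v ∉ K ∧ ∀ u ∈ K, G.Adj v u

section
variable {V : Type*} {G : SimpleGraph V}

theorem GoodPart.wdiv {s : Set V} (h : GoodPart G s) : WDiv G s := by
  classical
  obtain ⟨P, W, h1, h2, h3, h4⟩ := h
  intro w hw
  refine ⟨P, W, h1, h2, h3, fun K hK hKc => ?_⟩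
  obtain ⟨v, hvs, hvK, hv⟩ := h4 K hK hKc
  refine ⟨insert v K, ?_, ?_, ?_⟩
  · intro x hx
    rcases Finset.mem_insert.1 (Finset.mem_coe.1 hx) with rfl | hx
    · exact hvs
    · exact h1 ▸ Or.inr (hK hx)
  · rw [Finset.coe_insert]
    exact hKc.insert (fun b hb _ => hv b hb)
  · rw [Finset.sum_insert hvK]
    have := hw v
    omega

/-- A homogeneous set `X` is contracted to one vertex `x` that carries the maximum weight of a
clique of `X`. -/
theorem WDiv.of_module [Finite V] {s X : Set V} {x : V} (hX : ModuleIn G s X) (hx : x ∈ X)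
    (h1 : WDiv G (insert x (s \ X))) (h2 : WDiv G X) : WDiv G s := by
  classical
  intro w hw
  have := Fintype.ofFinite V
  obtain ⟨KX, hKX, hKmax⟩ := Finset.exists_max_image
    (Finset.univ.filter (fun K : Finset V => ↑K ⊆ X ∧ G.IsClique (↑K : Set V)))
    (fun K => ∑ v ∈ K, w v) ⟨∅, by simp⟩
  obtain ⟨hKXX, hKXc⟩ := (Finset.mem_filter.1 hKX).2
  set m := ∑ v ∈ KX, w v with hm
  have hmax : ∀ K : Finset V, ↑K ⊆ X → G.IsClique (↑K : Set V) → ∑ v ∈ K, w v ≤ m :=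
    fun K a b => hKmax K (Finset.mem_filter.2 ⟨Finset.mem_univ _, a, b⟩)
  have hm0 : 0 < m := (hw x).trans_le (by simpa using hmax {x} (by simpa using hx) (by simp))
  have hmod : ∀ y ∈ s, y ∉ X → ∀ a ∈ X, ∀ b ∈ X, G.Adj y a → G.Adj y b := by
    intro y hy hyX a ha b hb hab
    rcases hX.2 y hy hyX with h | h
    · exact h b hb
    · exact (h a ha hab).elim
  let w' : V → ℕ := fun v => if v = x then m else w v
  have hw'x : w' x = m := by simp [w']
  have hw'sum : ∀ K : Finset V, x ∉ K → ∑ v ∈ K, w' v = ∑ v ∈ K, w v := fun K hK =>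
    Finset.sum_congr rfl (fun v hv => by
      have : v ≠ x := fun h => hK (h ▸ hv)
      simp [w', this])
  -- cliques of the contracted graph lift to cliques of `s` of the same weight
  have hlift : ∀ K : Finset V, ↑K ⊆ insert x (s \ X) → G.IsClique (↑K : Set V) →
      ∃ K' : Finset V, ↑K' ⊆ s ∧ G.IsClique (↑K' : Set V) ∧ ∑ v ∈ K', w v = ∑ v ∈ K, w' v := by
    intro K hK hKc
    by_cases hxK : x ∈ K
    swap
    · refine ⟨K, fun y hy => ?_, hKc, (hw'sum K hxK).symm⟩
      rcases hK hy with h | h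
      · exact (hxK (h ▸ hy)).elim
      · exact h.1
    have hL : ∀ y ∈ K.erase x, y ∈ s ∧ y ∉ X := fun y hy =>
      (hK (Finset.mem_erase.1 hy).2).resolve_left (Finset.mem_erase.1 hy).1
    have hLx : ∀ y ∈ K.erase x, G.Adj y x := fun y hy =>
      hKc (Finset.mem_erase.1 hy).2 hxK (Finset.mem_erase.1 hy).1
    refine ⟨K.erase x ∪ KX, ?_, ?_, ?_⟩
    · intro y hy
      rcases Finset.mem_union.1 (Finset.mem_coe.1 hy) with h | h
      · exact (hL y h).1
      · exact hX.1 (hKXX h)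
    · intro a ha b hb hab
      rcases Finset.mem_union.1 (Finset.mem_coe.1 ha) with h | h <;>
      rcases Finset.mem_union.1 (Finset.mem_coe.1 hb) with h' | h'
      · exact hKc (Finset.mem_erase.1 h).2 (Finset.mem_erase.1 h').2 hab
      · exact hmod a (hL a h).1 (hL a h).2 x hx b (hKXX h') (hLx a h)
      · exact (hmod b (hL b h').1 (hL b h').2 x hx a (hKXX h) (hLx b h')).symm
      · exact hKXc h h' hab
    · rw [Finset.sum_union, ← Finset.add_sum_erase K w' hxK, hw'sum _ (by simp), hw'x, ← hm,
        add_comm]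
      rw [Finset.disjoint_left]
      exact fun a ha har => (hL a ha).2 (hKXX har)
  obtain ⟨P', W', hPW, hdisj, hP', hW'⟩ := h1 w' (fun v => by
    by_cases h : v = x
    · simpa [w', h] using hm0
    · simpa [w', h] using hw v)
  have hbeat : ∀ K : Finset V, ↑K ⊆ W' → G.IsClique (↑K : Set V) →
      ∃ K' : Finset V, ↑K' ⊆ s ∧ G.IsClique (↑K' : Set V) ∧
        ∑ v ∈ K, w' v < ∑ v ∈ K', w v := by
    intro K hK hKc
    obtain ⟨K1, a1, a2, a3⟩ := hW' K hK hKc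
    obtain ⟨K2, b1, b2, b3⟩ := hlift K1 a1 a2
    exact ⟨K2, b1, b2, b3 ▸ a3⟩
  -- the part of a clique outside `X`, together with `x`
  have hpart : ∀ K : Finset V, ↑K ⊆ s → G.IsClique (↑K : Set V) → ∀ y ∈ K, y ∈ X →
      x ∉ K.filter (· ∉ X) ∧ (↑(insert x (K.filter (· ∉ X))) : Set V) ⊆ insert x (s \ X) ∧
      G.IsClique (↑(insert x (K.filter (· ∉ X))) : Set V) ∧
      ∑ v ∈ insert x (K.filter (· ∉ X)), w' v = m + ∑ v ∈ K.filter (· ∉ X), w v := by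
    intro K hK hKc y hyK hyX
    have hxn : x ∉ K.filter (· ∉ X) := fun h => (Finset.mem_filter.1 h).2 hx
    refine ⟨hxn, ?_, ?_, ?_⟩
    · intro v hv
      rcases Finset.mem_insert.1 (Finset.mem_coe.1 hv) with h | h
      · exact Or.inl h
      · exact Or.inr ⟨hK (Finset.mem_filter.1 h).1, (Finset.mem_filter.1 h).2⟩
    · rw [Finset.coe_insert]
      refine (hKc.subset fun v hv => (Finset.mem_filter.1 hv).1).insert (fun b hb _ => ?_)
      have hb' := Finset.mem_filter.1 (Finset.mem_coe.1 hb)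
      exact (hmod b (hK hb'.1) hb'.2 y hyX x hx
        (hKc hb'.1 hyK (fun h => hb'.2 (h ▸ hyX)))).symm
    · rw [Finset.sum_insert hxn, hw'x, hw'sum _ hxn]
  have hsplit : ∀ K : Finset V, ∑ v ∈ K.filter (· ∈ X), w v + ∑ v ∈ K.filter (· ∉ X), w v
      = ∑ v ∈ K, w v := fun K => Finset.sum_filter_add_sum_filter_not K (· ∈ X) w
  have hP's : ∀ y ∈ P', y ≠ x → y ∈ s \ X := fun y hy hyx =>
    (hPW ▸ Or.inl hy : y ∈ insert x (s \ X)).resolve_left hyx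
  have hW's : ∀ y ∈ W', y ≠ x → y ∈ s \ X := fun y hy hyx =>
    (hPW ▸ Or.inr hy : y ∈ insert x (s \ X)).resolve_left hyx
  have hcov : ∀ y ∈ s, y ∉ X → y ∈ P' ∨ y ∈ W' := fun y hy hyX => by
    have : y ∈ insert x (s \ X) := Or.inr ⟨hy, hyX⟩
    rwa [← hPW] at this
  have hxPW : x ∈ P' ∨ x ∈ W' := by
    have : x ∈ insert x (s \ X) := Or.inl rfl
    rwa [← hPW] at this
  by_cases hxW : x ∈ W'
  · have hxP : x ∉ P' := fun h => Set.disjoint_left.1 hdisj h hxW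
    refine ⟨P', W' ∪ X, ?_, ?_, hP', ?_⟩
    · ext y
      constructor
      · rintro (h | h | h)
        · exact (hP's y h (fun e => hxP (e ▸ h))).1
        · by_cases e : y = x
          · exact hX.1 (e ▸ hx)
          · exact (hW's y h e).1
        · exact hX.1 h
      · intro hy
        by_cases hyX : y ∈ X
        · exact Or.inr (Or.inr hyX)
        · exact (hcov y hy hyX).imp id Or.inl
    · rw [Set.disjoint_left]
      rintro y hy (h | h)
      · exact Set.disjoint_left.1 hdisj hy h
      · exact (hP's y hy (fun e => hxP (e ▸ hy))).2 h
    · intro K hK hKc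
      by_cases hKX' : ∃ y ∈ K, y ∈ X
      · obtain ⟨y, hyK, hyX⟩ := hKX'
        have hKs : (↑K : Set V) ⊆ s := fun v hv => by
          rcases hK hv with h | h
          · by_cases e : v = x
            · exact hX.1 (e ▸ hx)
            · exact (hW's v h e).1
          · exact hX.1 h
        obtain ⟨_, b2, b3, b4⟩ := hpart K hKs hKc y hyK hyX
        obtain ⟨K', c1, c2, c3⟩ := hbeat _ (fun v hv => by
          rcases Finset.mem_insert.1 (Finset.mem_coe.1 hv) with h | h
          · exact h ▸ hxW
          · exact (hK (Finset.mem_filter.1 h).1).resolve_right (Finset.mem_filter.1 h).2) b3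
        refine ⟨K', c1, c2, ?_⟩
        have := hmax (K.filter (· ∈ X)) (fun v hv => (Finset.mem_filter.1 hv).2)
          (hKc.subset fun v hv => (Finset.mem_filter.1 hv).1)
        have := hsplit K
        omega
      · push Not at hKX'
        obtain ⟨K', c1, c2, c3⟩ := hbeat K (fun v hv => (hK hv).resolve_right (hKX' v hv)) hKc
        exact ⟨K', c1, c2, by rwa [hw'sum K (fun h => hKX' x h hx)] at c3⟩
  · have hxP : x ∈ P' := hxPW.resolve_right hxW
    obtain ⟨Px, Wx, hPWx, hdx, hPx, hWx⟩ := h2 w hw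
    have hPxX : ∀ y ∈ Px, y ∈ X := fun y hy => hPWx ▸ Or.inl hy
    have hWxX : ∀ y ∈ Wx, y ∈ X := fun y hy => hPWx ▸ Or.inr hy
    have hW's' : ∀ y ∈ W', y ∈ s \ X := fun y hy => hW's y hy (fun e => hxW (e ▸ hy))
    refine ⟨(P' \ {x}) ∪ Px, W' ∪ Wx, ?_, ?_, ?_, ?_⟩
    · ext y
      constructor
      · rintro ((h | h) | (h | h))
        · exact (hP's y h.1 h.2).1
        · exact hX.1 (hPxX y h)
        · exact (hW's' y h).1
        · exact hX.1 (hWxX y h)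
      · intro hy
        by_cases hyX : y ∈ X
        · rw [← hPWx] at hyX
          exact hyX.imp Or.inr Or.inr
        · rcases hcov y hy hyX with h | h
          · exact Or.inl (Or.inl ⟨h, fun e => hyX ((show y = x from e) ▸ hx)⟩)
          · exact Or.inr (Or.inl h)
    · rw [Set.disjoint_left]
      rintro y (h | h) (h' | h')
      · exact Set.disjoint_left.1 hdisj h.1 h'
      · exact (hP's y h.1 h.2).2 (hWxX y h')
      · exact (hW's' y h').2 (hPxX y h)
      · exact Set.disjoint_left.1 hdx h h'
    · refine PerfOn.subst hX (fun y hy => (hP's y hy.1 hy.2).1) (fun y hy => (hP's y hy.1 hy.2).2)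
        hPxX hx (hP'.mono ?_) hPx
      rintro y (rfl | hy)
      · exact hxP
      · exact hy.1
    · intro K hK hKc
      by_cases hKX' : ∃ y ∈ K, y ∈ X
      · obtain ⟨y, hyK, hyX⟩ := hKX'
        have hKs : (↑K : Set V) ⊆ s := fun v hv => by
          rcases hK hv with h | h
          · exact (hW's' v h).1
          · exact hX.1 (hWxX v h)
        obtain ⟨_, b2, b3, b4⟩ := hpart K hKs hKc y hyK hyX
        obtain ⟨K', c1, c2, c3⟩ := hlift _ b2 b3
        refine ⟨K', c1, c2, ?_⟩
        obtain ⟨L, l1, l2, l3⟩ := hWx (K.filter (· ∈ X))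
          (fun v hv => (hK (Finset.mem_filter.1 hv).1).resolve_left
            (fun h => (hW's' v h).2 (Finset.mem_filter.1 hv).2))
          (hKc.subset fun v hv => (Finset.mem_filter.1 hv).1)
        have := hmax L l1 l2
        have := hsplit K
        omega
      · push Not at hKX'
        obtain ⟨K', c1, c2, c3⟩ := hbeat K
          (fun v hv => (hK hv).resolve_right (fun h => hKX' v hv (hWxX v h))) hKc
        exact ⟨K', c1, c2, by rwa [hw'sum K (fun h => hKX' x h hx)] at c3⟩

end

/-! ### Prime bull-free graphs -/

/-- `G[C]` is prime and not a split graph. Both properties are invariant under complementation,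
and minimally imperfect graphs have them. A vertex complete to such a set `C` is called a centre of
`C`, a vertex outside `C` that is anticomplete to `C` an anticentre. -/
def Sturdy {V : Type*} (G : SimpleGraph V) (C : Set V) : Prop :=
  PrimeOn G C ∧ ∀ S ⊆ C, (∀ x ∈ S, ∀ y ∈ S, ¬ G.Adj x y) →
    (∀ x ∈ C, ∀ y ∈ C, x ∉ S → y ∉ S → x ≠ y → G.Adj x y) → False

/-- Bull-freeness spelled out: `a, b, c` is the triangle, `d` hangs on `a` and `e` on `b`. -/
def NoBull {V : Type*} (G : SimpleGraph V) : Prop :=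
  ∀ a b c d e, G.Adj a b → G.Adj a c → G.Adj b c → G.Adj d a → G.Adj e b →
    ¬ G.Adj d b → ¬ G.Adj d c → ¬ G.Adj e a → ¬ G.Adj e c → ¬ G.Adj d e → False

section
variable {V : Type*} {G : SimpleGraph V}

theorem MinImp.not_simplicial [Finite V] {C : Set V} (h : MinImp G C) {v : V} (hv : v ∈ C)
    (hs : ∀ x ∈ C, ∀ y ∈ C, G.Adj v x → G.Adj v y → x ≠ y → G.Adj x y) : False :=
  h.1 (PerfOn.simplicial (h.2 (C \ {v}) Set.sdiff_subset
    (fun e => (e.ge hv : v ∈ C \ {v}).2 rfl)) hs)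

theorem MinImp.not_bip {C : Set V} (h : MinImp G C) (S : Set V)
    (h1 : ∀ x ∈ C, ∀ y ∈ C, x ∈ S → y ∈ S → ¬ G.Adj x y)
    (h2 : ∀ x ∈ C, ∀ y ∈ C, x ∉ S → y ∉ S → ¬ G.Adj x y) : False :=
  h.1 (perfOn_of_bip S h1 h2)

theorem MinImp.prime [Finite V] {C : Set V} (h : MinImp G C) : PrimeOn G C := by
  intro X hX
  by_contra hcon
  push Not at hcon
  obtain ⟨hns, hne⟩ := hcon
  obtain ⟨x, hx, y, hy, hxy⟩ := hns
  have h1 := h.2 X hX.1 hne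
  have h2 := h.2 (insert x (C \ X))
    (fun v hv => hv.elim (fun e => hX.1 (e ▸ hx)) (fun h => h.1))
    (fun e => by
      have : y ∈ insert x (C \ X) := e.ge (hX.1 hy)
      rcases this with h | h
      · exact hxy h.symm
      · exact h.2 hy)
  have h3 := PerfOn.subst (P' := C \ X) hX Set.sdiff_subset (fun y hy => hy.2) subset_rfl hx h2 h1
  refine h.1 (h3.mono fun v hv => ?_)
  by_cases hvX : v ∈ X
  · exact Or.inr hvX
  · exact Or.inl ⟨hv, hvX⟩

theorem MinImp.nonempty {C : Set V} (h : MinImp G C) : C.Nonempty := by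
  rw [Set.nonempty_iff_ne_empty]
  rintro rfl
  exact h.not_bip ∅ (by simp) (by simp)

theorem MinImp.sturdy [Finite V] {C : Set V} (h : MinImp G C) : Sturdy G C := by
  refine ⟨h.prime, fun S hS hst hcl => ?_⟩
  rcases S.eq_empty_or_nonempty with rfl | ⟨v, hv⟩
  · obtain ⟨v, hv⟩ := h.nonempty
    exact h.not_simplicial hv (fun x hx y hy _ _ hxy => hcl x hx y hy (by simp) (by simp) hxy)
  · exact h.not_simplicial (hS hv) (fun x hx y hy h1 h2 hxy =>
      hcl x hx y hy (fun h => hst v hv x h h1) (fun h => hst v hv y h h2) hxy)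

theorem PrimeOn.compl {s : Set V} (h : PrimeOn G s) : PrimeOn Gᶜ s := by
  intro X hX
  refine h X ⟨hX.1, fun y hy hyX => ?_⟩
  have hne : ∀ x ∈ X, y ≠ x := fun x hx e => hyX (e ▸ hx)
  rcases hX.2 y hy hyX with h | h
  · exact Or.inr (fun x hx => ((compl_adj _ _ _).1 (h x hx)).2)
  · exact Or.inl (fun x hx => by
      by_contra hn
      exact h x hx ((compl_adj _ _ _).2 ⟨hne x hx, hn⟩))

theorem Sturdy.compl {C : Set V} (h : Sturdy G C) : Sturdy Gᶜ C := by
  refine ⟨h.1.compl, fun S hS h1 h2 => h.2 (C \ S) Set.sdiff_subset ?_ ?_⟩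
  · intro x hx y hy hxy
    exact ((compl_adj _ _ _).1 (h2 x hx.1 y hy.1 hx.2 hy.2 hxy.ne)).2 hxy
  · intro x hx y hy hxS hyS hxy
    by_contra hn
    have hx' : x ∈ S := by by_contra h; exact hxS ⟨hx, h⟩
    have hy' : y ∈ S := by by_contra h; exact hyS ⟨hy, h⟩
    exact h1 x hx' y hy' ((compl_adj _ _ _).2 ⟨hxy, hn⟩)

/-- The bull is self-complementary. -/
theorem NoBull.compl (h : NoBull G) : NoBull Gᶜ := by
  intro a b c d e hab hac hbc hda heb hdb hdc hea hec hde
  have key : ∀ {x y}, x ≠ y → ¬ Gᶜ.Adj x y → G.Adj x y := fun hxy hn => by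
    by_contra h'
    exact hn ((compl_adj _ _ _).2 ⟨hxy, h'⟩)
  have n1 : d ≠ b := fun h => hdc (h ▸ hbc)
  have n2 : d ≠ c := fun h => hdb (h ▸ hbc.symm)
  have n3 : e ≠ a := fun h => hec (h ▸ hac)
  have n4 : e ≠ c := fun h => hea (h ▸ hac.symm)
  have n5 : d ≠ e := fun h => hea (h ▸ hda)
  refine h d e c b a (key n5 hde) (key n2 hdc) (key n4 hec) (key n1 hdb).symm
    (key n3 hea).symm ?_ ?_ ?_ ?_ ?_
  · exact fun h => ((compl_adj _ _ _).1 heb).2 h.symm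
  · exact ((compl_adj _ _ _).1 hbc).2
  · exact fun h => ((compl_adj _ _ _).1 hda).2 h.symm
  · exact ((compl_adj _ _ _).1 hac).2
  · exact fun h => ((compl_adj _ _ _).1 hab).2 h.symm

/-- The connected component of `c` in `G[Q]`, as the least subset closed under adjacency. -/
theorem exists_comp {Q : Set V} {c : V} (hc : c ∈ Q) : ∃ Z ⊆ Q, c ∈ Z ∧
    (∀ z ∈ Z, ∀ q ∈ Q, G.Adj z q → q ∈ Z) ∧ ConnOn G Z := by
  let cl : Set V → Prop := fun Y => c ∈ Y ∧ ∀ z ∈ Y, ∀ q ∈ Q, G.Adj z q → q ∈ Y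
  have hZ : ∀ Y, cl Y → {v | ∀ Y, cl Y → v ∈ Y} ⊆ Y := fun Y hY v hv => hv Y hY
  have hZQ : {v | ∀ Y, cl Y → v ∈ Y} ⊆ Q := hZ Q ⟨hc, fun _ _ q hq _ => hq⟩
  have hcl : ∀ z ∈ {v | ∀ Y, cl Y → v ∈ Y}, ∀ q ∈ Q, G.Adj z q → q ∈ {v | ∀ Y, cl Y → v ∈ Y} :=
    fun z hz q hq hzq Y hY => hY.2 z (hz Y hY) q hq hzq
  refine ⟨{v | ∀ Y, cl Y → v ∈ Y}, hZQ, fun Y hY => hY.1, hcl, fun Y hYZ hYne hYn => ?_⟩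
  by_contra hcon
  push Not at hcon
  by_cases hcY : c ∈ Y
  · refine hYn (hYZ.antisymm (hZ Y ⟨hcY, fun z hz q hq hzq => ?_⟩))
    by_contra hqY
    exact hcon z hz q (hcl z (hYZ hz) q hq hzq) hqY hzq
  · obtain ⟨y, hy⟩ := hYne
    refine (hYZ hy ({v | ∀ Y, cl Y → v ∈ Y} \ Y) ⟨⟨fun Y hY => hY.1, hcY⟩, ?_⟩).2 hy
    intro z hz q hq hzq
    refine ⟨hcl z hz.1 q hq hzq, fun hqY => hcon q hqY z hz.1 hz.2 hzq.symm⟩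

/-- The form in which primality is used throughout: a proper subset `Q` that contains an edge
has a component with at least two vertices, which is not homogeneous, so some vertex outside `Q`
distinguishes the ends of some edge inside `Q`. -/
theorem PrimeOn.distinguish {s Q : Set V} (h : PrimeOn G s) (hQ : Q ⊆ s) (hne : Q ≠ s) {y0 z0 : V}
    (hy0 : y0 ∈ Q) (hz0 : z0 ∈ Q) (hyz : G.Adj y0 z0) :
    ∃ w ∈ s, w ∉ Q ∧ ∃ y ∈ Q, ∃ z ∈ Q, G.Adj y z ∧ G.Adj w y ∧ ¬ G.Adj w z := by
  obtain ⟨Z, hZQ, hyZ, hcl, hconn⟩ := exists_comp (G := G) hy0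
  have hzZ := hcl y0 hyZ z0 hz0 hyz
  have hnm : ¬ ModuleIn G s Z := fun hm => by
    rcases h Z hm with h' | h'
    · exact hyz.ne (h' hyZ hzZ)
    · exact hne (hQ.antisymm (h' ▸ hZQ))
  have : ∃ w ∈ s, w ∉ Z ∧ (∃ x ∈ Z, ¬ G.Adj w x) ∧ ∃ x ∈ Z, G.Adj w x := by
    by_contra hcon
    refine hnm ⟨hZQ.trans hQ, fun y hy hyZ => ?_⟩
    by_contra hn
    push Not at hn
    exact hcon ⟨y, hy, hyZ, hn.1, hn.2⟩
  obtain ⟨w, hws, hwZ, ⟨x1, hx1, hx1w⟩, x2, hx2, hx2w⟩ := this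
  obtain ⟨y, hy, z, hz, hzY, hyz'⟩ := hconn {x | x ∈ Z ∧ G.Adj w x} (fun x hx => hx.1)
    ⟨x2, hx2, hx2w⟩ (fun e => hx1w (e.ge hx1 : x1 ∈ {x | x ∈ Z ∧ G.Adj w x}).2)
  exact ⟨w, hws, fun hwQ => hwZ (hcl y hy.1 w hwQ hy.2.symm), y, hZQ hy.1, z, hZQ hz, hyz', hy.2,
    fun h => hzY ⟨hz, h⟩⟩

/-- In a prime graph a disconnection has both sides of size at most one. -/
theorem PrimeOn.cut {s Z : Set V} (h : PrimeOn G s) (hZs : Z ⊆ s) (hne : Z.Nonempty)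
    (hns : Z ≠ s) (hcut : ∀ z ∈ Z, ∀ y ∈ s, y ∉ Z → ¬ G.Adj z y) :
    Z.Subsingleton ∧ (s \ Z).Subsingleton := by
  constructor
  · refine (h Z ⟨hZs, fun y hy hyZ => Or.inr fun x hx hyx => ?_⟩).resolve_right hns
    exact hcut x hx y hy hyZ hyx.symm
  · refine (h (s \ Z) ⟨Set.sdiff_subset, fun y hy hyZ => Or.inr fun x hx hyx => ?_⟩).resolve_right
      (fun e => ?_)
    · have : y ∈ Z := by by_contra h; exact hyZ ⟨hy, h⟩
      exact hcut y this x hx.1 hx.2 hyx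
    · obtain ⟨z, hz⟩ := hne
      exact (e.ge (hZs hz) : z ∈ s \ Z).2 hz

theorem Sturdy.conn {C : Set V} (h : Sturdy G C) : ConnOn G C := by
  intro Y hY hne hYC
  by_contra hcon
  push Not at hcon
  obtain ⟨h1, h2⟩ := h.1.cut hY hne hYC hcon
  refine h.2 Y hY (fun x hx y hy hxy => hxy.ne (h1 hx hy)) (fun x hx y hy hxY hyY hxy => ?_)
  exact (hxy (h2 ⟨hx, hxY⟩ ⟨hy, hyY⟩)).elim

theorem Sturdy.exists_adj {C : Set V} (h : Sturdy G C) : ∃ x ∈ C, ∃ y ∈ C, G.Adj x y := by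
  by_contra hcon
  push Not at hcon
  exact h.2 C subset_rfl hcon (fun x hx _ _ hn => (hn hx).elim)

theorem Sturdy.exists_nbr {C : Set V} (h : Sturdy G C) {c : V} (hc : c ∈ C) :
    ∃ d ∈ C, G.Adj c d := by
  obtain ⟨x, hx, y, hy, hxy⟩ := h.exists_adj
  obtain ⟨c', hc', d, hd, _, hcd⟩ := h.conn {c} (by simpa using hc) (by simp) (fun e => by
    rw [← e] at hx hy
    exact hxy.ne (hx.trans hy.symm))
  exact ⟨d, hd, (show c' = c from hc') ▸ hcd⟩

/-- If `u` has a neighbour `a` anticomplete to the prime set `C`, then `u` is either complete to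
`C` or its neighbourhood in `C` is stable. -/
theorem stable_of_anti (hb : NoBull G) {C : Set V} (hC : PrimeOn G C) {a u : V} (hau : G.Adj a u)
    (ha : ∀ c ∈ C, ¬ G.Adj a c) (hu : ¬ ∀ c ∈ C, G.Adj u c) :
    ∀ y ∈ C, ∀ z ∈ C, G.Adj u y → G.Adj u z → ¬ G.Adj y z := by
  intro y hy z hz huy huz hyz
  obtain ⟨w, hw, hwQ, y', hy', z', hz', h1, h2, h3⟩ := hC.distinguish
    (Q := {c | c ∈ C ∧ G.Adj u c}) (fun c hc => hc.1)
    (fun e => hu fun c hc => (e.ge hc : c ∈ {c | c ∈ C ∧ G.Adj u c}).2) ⟨hy, huy⟩ ⟨hz, huz⟩ hyz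
  exact hb u y' z' a w hy'.2 hz'.2 h1 hau h2 (ha _ hy'.1) (ha _ hz'.1)
    (fun h => hwQ ⟨hw, h.symm⟩) h3 (ha w hw)

/-- A vertex `u` that is mixed on `C` and adjacent to an anticentre `a` is adjacent to every
centre `b`: otherwise its neighbourhood in `C` is stable and its non-neighbourhood a clique. -/
theorem mixed_alpha (hb : NoBull G) {C : Set V} (hC : Sturdy G C) {a b u : V}
    (hu1 : ∃ c ∈ C, G.Adj u c) (hu2 : ∃ c ∈ C, ¬ G.Adj u c) (huC : u ∉ C)
    (ha : ∀ c ∈ C, ¬ G.Adj a c) (hbC : ∀ c ∈ C, G.Adj b c)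
    (hau : G.Adj a u) : G.Adj b u := by
  by_contra hbu
  obtain ⟨c1, hc1, huc1⟩ := hu1
  obtain ⟨c2, hc2, huc2⟩ := hu2
  have hne : b ≠ u := fun e => huc2 (e ▸ hbC c2 hc2)
  have st := stable_of_anti hb hC.1 hau ha (fun h => huc2 (h c2 hc2))
  have cl := stable_of_anti hb.compl hC.1.compl ((compl_adj _ _ _).2 ⟨hne, hbu⟩)
    (fun c hc h => ((compl_adj _ _ _).1 h).2 (hbC c hc))
    (fun h => ((compl_adj _ _ _).1 (h c1 hc1)).2 huc1)
  refine hC.2 {c | c ∈ C ∧ G.Adj u c} (fun c hc => hc.1)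
    (fun x hx y hy => st x hx.1 y hy.1 hx.2 hy.2) (fun x hx y hy hxS hyS hxy => ?_)
  by_contra hn
  refine cl x hx y hy ((compl_adj _ _ _).2 ⟨?_, fun h => hxS ⟨hx, h⟩⟩)
    ((compl_adj _ _ _).2 ⟨?_, fun h => hyS ⟨hy, h⟩⟩) ((compl_adj _ _ _).2 ⟨hxy, hn⟩)
  · rintro rfl; exact huC hx
  · rintro rfl; exact huC hy

/-- An anticentre `a` with a neighbour `u` that is mixed on `C` is adjacent to every centre `b`. -/
theorem mixed_beta (hb : NoBull G) {C : Set V} (hC : Sturdy G C) {a b u : V}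
    (hu1 : ∃ c ∈ C, G.Adj u c) (hu2 : ∃ c ∈ C, ¬ G.Adj u c) (huC : u ∉ C)
    (ha : ∀ c ∈ C, ¬ G.Adj a c) (hbC : ∀ c ∈ C, G.Adj b c)
    (hau : G.Adj a u) : G.Adj a b := by
  by_contra hab
  have hbu := mixed_alpha hb hC hu1 hu2 huC ha hbC hau
  obtain ⟨c1, hc1, huc1⟩ := hu1
  obtain ⟨c2, hc2, huc2⟩ := hu2
  have st := stable_of_anti hb hC.1 hau ha (fun h => huc2 (h c2 hc2))
  -- `G[C]` is connected in the complement, so some neighbour and non-neighbour are nonadjacent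
  obtain ⟨c, hc, c', hc', hcS, hcc⟩ := hC.compl.conn {c | c ∈ C ∧ G.Adj u c} (fun c hc => hc.1)
    ⟨c1, hc1, huc1⟩ (fun e => huc2 (e.ge hc2 : c2 ∈ {c | c ∈ C ∧ G.Adj u c}).2)
  have huc' : ¬ G.Adj u c' := fun h => hcS ⟨hc', h⟩
  exact hb u b c a c' hbu.symm hc.2 (hbC c hc.1) hau (hbC c' hc').symm hab (ha c hc.1)
    (fun h => huc' h.symm) (fun h => ((compl_adj _ _ _).1 hcc).2 h.symm) (ha c' hc')

/-- One of the two complementary cases of `no_centre`: every vertex that is mixed on `C` is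
complete to the set of centres. Applying `PrimeOn.distinguish` to the noncentral vertices complete
to all centres produces a bull. -/
theorem no_centre_aux (hb : NoBull G) (hG : PrimeOn G Set.univ) {C : Set V} (hC : Sturdy G C)
    {b : V} (hbC : ∀ c ∈ C, G.Adj b c)
    (F1 : ∀ u ∉ C, (∃ c ∈ C, G.Adj u c) → (∃ c ∈ C, ¬ G.Adj u c) →
      ∀ b, (∀ c ∈ C, G.Adj b c) → G.Adj u b)
    (F2 : ∀ u ∉ C, (∃ c ∈ C, G.Adj u c) → (∃ c ∈ C, ¬ G.Adj u c) →
      ∀ a, (∀ c ∈ C, ¬ G.Adj a c) → G.Adj a u → ∀ b, (∀ c ∈ C, G.Adj b c) → G.Adj a b) :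
    False := by
  obtain ⟨x, hx, y, hy, hxy⟩ := hC.exists_adj
  let B : Set V := {b | ∀ c ∈ C, G.Adj b c}
  have hCB : ∀ c ∈ C, c ∉ B := fun c hc h => G.loopless.irrefl c (h c hc)
  obtain ⟨w, _, hwQ, y, hy, z, hz, hyz, hwy, hwz⟩ := hG.distinguish
    (Q := {v | v ∉ B ∧ ∀ b ∈ B, G.Adj v b}) (Set.subset_univ _)
    (fun e => (e.ge (Set.mem_univ b) : b ∈ {v | v ∉ B ∧ ∀ b ∈ B, G.Adj v b}).1 hbC)
    ⟨hCB x hx, fun b hb => (hb x hx).symm⟩ ⟨hCB y hy, fun b hb => (hb y hy).symm⟩ hxy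
  have hwB : w ∉ B := fun h => hwz (hz.2 w h).symm
  obtain ⟨b', hb', hwb'⟩ : ∃ b' ∈ B, ¬ G.Adj w b' := by
    by_contra hcon
    push Not at hcon
    exact hwQ ⟨hwB, hcon⟩
  have hwC : w ∉ C := fun h => hwb' (hb' w h).symm
  have hnc : ∀ {v}, v ∉ B → ∃ c ∈ C, ¬ G.Adj v c := fun {v} hv => by
    by_contra hcon
    push Not at hcon
    exact hv hcon
  have hwA : ∀ c ∈ C, ¬ G.Adj w c := fun c hc h => hwb' (F1 w hwC ⟨c, hc, h⟩ (hnc hwB) b' hb')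
  have hyC : y ∉ C := fun h => hwA y h hwy
  have hyA : ∀ c ∈ C, ¬ G.Adj y c := fun c hc h =>
    hwb' (F2 y hyC ⟨c, hc, h⟩ (hnc hy.1) w hwA hwy b' hb')
  obtain ⟨c, hc, hzc⟩ := hnc hz.1
  exact hb y b' z w c (hy.2 b' hb') hyz (hz.2 b' hb').symm hwy (hb' c hc).symm hwb' hwz
    (fun h => hyA c hc h.symm) (fun h => hzc h.symm) (hwA c hc)

/-- In a prime bull-free graph, a set `C` as in `Sturdy` cannot have both an anticentre `a` and a
centre `b` (compare Chudnovsky and Safra's lemma on odd holes). -/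
theorem no_centre (hb : NoBull G) (hG : PrimeOn G Set.univ) {C : Set V} (hC : Sturdy G C)
    {a b : V} (haC : a ∉ C) (ha : ∀ c ∈ C, ¬ G.Adj a c) (hbC : ∀ c ∈ C, G.Adj b c) : False := by
  by_cases F1 : ∀ u ∉ C, (∃ c ∈ C, G.Adj u c) → (∃ c ∈ C, ¬ G.Adj u c) →
      ∀ b, (∀ c ∈ C, G.Adj b c) → G.Adj u b
  · exact no_centre_aux hb hG hC hbC F1
      (fun u hu h1 h2 a ha hau b hb' => mixed_beta hb hC h1 h2 hu ha hb' hau)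
  · push Not at F1
    obtain ⟨u, huC, ⟨c1, hc1, huc1⟩, ⟨c2, hc2, huc2⟩, b1, hb1, hub1⟩ := F1
    have conv : ∀ {x y}, x ≠ y → ¬ Gᶜ.Adj x y → G.Adj x y := fun hxy hn => by
      by_contra h'
      exact hn ((compl_adj _ _ _).2 ⟨hxy, h'⟩)
    have hCne : ∀ v, (∀ c ∈ C, ¬ Gᶜ.Adj v c) → v ∉ C → ∀ c ∈ C, G.Adj v c := fun v hv hvC c hc =>
      conv (fun e => hvC (e ▸ hc)) (hv c hc)
    have hbnC : ∀ {b}, (∀ c ∈ C, G.Adj b c) → b ∉ C := fun {b} h hbC' =>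
      G.loopless.irrefl b (h b hbC')
    have hub1' : Gᶜ.Adj b1 u := (compl_adj _ _ _).2
      ⟨fun e => huc2 (e ▸ hb1 c2 hc2), fun h => hub1 h.symm⟩
    -- by complementation, the noncentre `u` of `b1` forces `b1` to be anticomplete to anticentres
    have hanti : ∀ a', a' ∉ C → (∀ c ∈ C, ¬ G.Adj a' c) → ¬ G.Adj b1 a' := fun a' ha'C ha' =>
      ((compl_adj _ _ _).1 (mixed_beta hb.compl hC.compl (a := b1) (b := a') (u := u)
        ⟨c2, hc2, (compl_adj _ _ _).2 ⟨fun e => huC (e ▸ hc2), huc2⟩⟩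
        ⟨c1, hc1, fun h => ((compl_adj _ _ _).1 h).2 huc1⟩ huC
        (fun c hc h => ((compl_adj _ _ _).1 h).2 (hb1 c hc))
        (fun c hc => (compl_adj _ _ _).2 ⟨fun e => ha'C (e ▸ hc), ha' c hc⟩) hub1')).2
    have hmix : ∀ v ∉ C, (∃ c ∈ C, G.Adj v c) → (∃ c ∈ C, ¬ G.Adj v c) → ∀ a', a' ∉ C →
        (∀ c ∈ C, ¬ G.Adj a' c) → ¬ G.Adj a' v := fun v hvC h1 h2 a' ha'C ha' hav =>
      hanti a' ha'C ha' (mixed_beta hb hC h1 h2 hvC ha' hb1 hav).symm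
    have hCcen : ∀ v, (∀ c ∈ C, Gᶜ.Adj v c) → v ∉ C ∧ ∀ c ∈ C, ¬ G.Adj v c := fun v hv =>
      ⟨fun hvC => Gᶜ.loopless.irrefl v (hv v hvC), fun c hc => ((compl_adj _ _ _).1 (hv c hc)).2⟩
    refine no_centre_aux hb.compl hG.compl hC.compl (b := a)
      (fun c hc => (compl_adj _ _ _).2 ⟨fun e => haC (e ▸ hc), ha c hc⟩) ?_ ?_
    · rintro v hvC ⟨d1, hd1, hvd1⟩ ⟨d2, hd2, hvd2⟩ a' ha'
      obtain ⟨e1, e2⟩ := hCcen a' ha'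
      have hvd2' : G.Adj v d2 := conv (fun e => hvC (e ▸ hd2)) hvd2
      refine (compl_adj _ _ _).2 ⟨fun e => e2 d2 hd2 (e ▸ hvd2'), fun h => ?_⟩
      exact hmix v hvC ⟨d2, hd2, hvd2'⟩ ⟨d1, hd1, ((compl_adj _ _ _).1 hvd1).2⟩ a' e1 e2 h.symm
    · exact fun v hv h1 h2 a' ha' hav b' hb' => mixed_beta hb.compl hC.compl h1 h2 hv ha' hb' hav

end

/-! ### Excluding the hammer, the house or the diamond -/

/-- Hammer-freeness spelled out: triangle `x, y, z` with the path `z, p, q`. -/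
def NoHammer {V : Type*} (G : SimpleGraph V) : Prop :=
  ∀ x y z p q, G.Adj x y → G.Adj x z → G.Adj y z → G.Adj p z → G.Adj q p →
    ¬ G.Adj p x → ¬ G.Adj p y → ¬ G.Adj q x → ¬ G.Adj q y → ¬ G.Adj q z → False

/-- House-freeness spelled out: square `x, y, w, u` with the roof `z` on `x, y`. -/
def NoHouse {V : Type*} (G : SimpleGraph V) : Prop :=
  ∀ x y z u w, G.Adj x y → G.Adj x z → G.Adj y z → G.Adj u x → G.Adj w y → G.Adj u w →
    ¬ G.Adj u y → ¬ G.Adj u z → ¬ G.Adj w x → ¬ G.Adj w z → False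

/-- Diamond-freeness spelled out: `c` and `d` are the nonadjacent vertices. -/
def NoDiamond {V : Type*} (G : SimpleGraph V) : Prop :=
  ∀ a b c d, G.Adj a b → G.Adj a c → G.Adj a d → G.Adj b c → G.Adj b d → c ≠ d → G.Adj c d

section
variable {V : Type*} {G : SimpleGraph V}

/-- In a prime (bull, hammer)-free graph, non-neighbourhoods of vertices in triangles contain no
minimally imperfect graph. The neighbourhoods in `C` of the other two triangle vertices are
stable; unless both are empty, hammer-freeness makes `G[C]` bipartite. Otherwise the triangle is
anticomplete to `C`, and a vertex that separates it from `C` becomes a centre. -/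
theorem hammer_case [Finite V] (hb : NoBull G) (hh : NoHammer G) (hG : PrimeOn G Set.univ)
    (hconn : ConnOn G Set.univ) {C : Set V} (hC : MinImp G C) {x y z : V} (hxy : G.Adj x y)
    (hxz : G.Adj x z) (hyz : G.Adj y z) (hxC : x ∉ C) (hx : ∀ c ∈ C, ¬ G.Adj x c) : False := by
  have hS := hC.sturdy
  have hyst := stable_of_anti hb hS.1 hxy hx (fun h => no_centre hb hG hS hxC hx h)
  have hzst := stable_of_anti hb hS.1 hxz hx (fun h => no_centre hb hG hS hxC hx h)
  have hyC : y ∉ C := fun h => hx y h hxy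
  have hzC : z ∉ C := fun h => hx z h hxz
  have closed_eq : ∀ D ⊆ C, D.Nonempty → (∀ d ∈ D, ∀ d' ∈ C, G.Adj d d' → d' ∈ D) → D = C := by
    intro D hD hne hcl
    by_contra hn
    obtain ⟨d, hd, d', hd', hd'D, hdd'⟩ := hS.conn D hD hne hn
    exact hd'D (hcl d hd d' hd' hdd')
  -- no vertex of `C` is adjacent to exactly one of `y, z`
  have sub1 : ∀ d ∈ C, G.Adj y d ↔ G.Adj z d := by
    by_contra hcon
    push Not at hcon
    obtain ⟨d0, hd0, hd0'⟩ := hcon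
    have hDC := closed_eq {d | d ∈ C ∧ ((G.Adj y d ∧ ¬ G.Adj z d) ∨ (¬ G.Adj y d ∧ G.Adj z d))}
      (fun d hd => hd.1) ⟨d0, hd0, hd0'⟩ (by
        rintro d ⟨hd, h | h⟩ d' hd' hdd'
        · have h1 : ¬ G.Adj y d' := fun h' => hyst d hd d' hd' h.1 h' hdd'
          refine ⟨hd', Or.inr ⟨h1, ?_⟩⟩
          by_contra h2
          exact hh x z y d d' hxz hxy hyz.symm h.1.symm hdd'.symm (fun g => hx d hd g.symm)
            (fun g => h.2 g.symm) (fun g => hx d' hd' g.symm) (fun g => h2 g.symm)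
            (fun g => h1 g.symm)
        · have h1 : ¬ G.Adj z d' := fun h' => hzst d hd d' hd' h.2 h' hdd'
          refine ⟨hd', Or.inl ⟨?_, h1⟩⟩
          by_contra h2
          exact hh x y z d d' hxy hxz hyz h.2.symm hdd'.symm (fun g => hx d hd g.symm)
            (fun g => h.1 g.symm) (fun g => hx d' hd' g.symm) (fun g => h2 g.symm)
            (fun g => h1 g.symm))
    have hall := fun d (hd : d ∈ C) => (hDC.ge hd).2
    refine hC.not_bip {d | G.Adj y d} (fun a ha b hb => hyst a ha b hb) (fun a ha b hb h1 h2 => ?_)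
    exact hzst a ha b hb ((hall a ha).resolve_left fun h => h1 h.1).2
      ((hall b hb).resolve_left fun h => h2 h.1).2
  have two_step : ∀ d ∈ C, G.Adj y d → ∀ d1 ∈ C, G.Adj d d1 → ∀ d2 ∈ C, G.Adj d1 d2 →
      G.Adj y d2 := by
    intro d hd hyd d1 hd1 hdd1 d2 hd2 hd12
    by_contra hn
    have hn1 : ¬ G.Adj y d1 := fun h => hyst d hd d1 hd1 hyd h hdd1
    by_cases hadj : G.Adj d d2
    · exact hh d1 d2 d y x hd12 hdd1.symm hadj.symm hyd hxy hn1 hn (hx d1 hd1) (hx d2 hd2) (hx d hd)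
    · refine hh y z d d1 d2 hyz hyd ((sub1 d hd).1 hyd) hdd1.symm hd12.symm (fun g => hn1 g.symm)
        (fun g => hn1 ((sub1 d1 hd1).2 g.symm)) (fun g => hn g.symm)
        (fun g => hn ((sub1 d2 hd2).2 g.symm)) (fun g => hadj g.symm)
  have hyanti : ∀ c ∈ C, ¬ G.Adj y c := by
    intro c hc hyc
    have hDC := closed_eq {v | v ∈ C ∧ (G.Adj y v ∨ ∃ d ∈ C, G.Adj y d ∧ G.Adj d v)}
      (fun d hd => hd.1) ⟨c, hc, Or.inl hyc⟩ (by
        rintro d ⟨hd, h | ⟨e, he, hye, hed⟩⟩ d' hd' hdd'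
        · exact ⟨hd', Or.inr ⟨d, hd, h, hdd'⟩⟩
        · exact ⟨hd', Or.inl (two_step e he hye d hd hed d' hd' hdd')⟩)
    refine hC.not_bip {d | G.Adj y d} (fun a ha b hb => hyst a ha b hb) (fun a ha b hb h1 h2 hab => ?_)
    obtain ⟨e, he, hye, hea⟩ := (hDC.ge ha).2.resolve_left h1
    exact h2 (two_step e he hye a ha hea b hb hab)
  have hzanti : ∀ c ∈ C, ¬ G.Adj z c := fun c hc h => hyanti c hc ((sub1 c hc).2 h)
  let M : Set V := {v | v ≠ x ∧ v ≠ y ∧ v ≠ z ∧ ¬ G.Adj v x ∧ ¬ G.Adj v y ∧ ¬ G.Adj v z}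
  have hCM : C ⊆ M := fun c hc => ⟨fun e => hxC (e ▸ hc), fun e => hyC (e ▸ hc),
    fun e => hzC (e ▸ hc), fun g => hx c hc g.symm, fun g => hyanti c hc g.symm,
    fun g => hzanti c hc g.symm⟩
  obtain ⟨c0, hc0⟩ := hC.nonempty
  obtain ⟨Z, hZM, hc0Z, hZcl, hZconn⟩ := exists_comp (G := G) (hCM hc0)
  have hCZ : C ⊆ Z := by
    have := closed_eq (C ∩ Z) Set.inter_subset_left ⟨c0, hc0, hc0Z⟩
      (fun d hd d' hd' hdd' => ⟨hd', hZcl d hd.2 d' (hCM hd') hdd'⟩)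
    exact fun c hc => (this.ge hc).2
  obtain ⟨q, hq, p, _, hpZ, hqp⟩ := hconn Z (Set.subset_univ _) ⟨c0, hc0Z⟩
    (fun e => (hZM (e.ge (Set.mem_univ x))).1 rfl)
  have hpM : p ∉ M := fun h => hpZ (hZcl q hq p h hqp)
  obtain ⟨hq1, hq2, hq3, hqx, hqy, hqz⟩ := hZM hq
  -- `p` sees at least two vertices of the triangle
  have htwo : ∃ t t', G.Adj t t' ∧ G.Adj t p ∧ G.Adj t' p ∧
      ∀ v ∈ M, ¬ G.Adj v t ∧ ¬ G.Adj v t' := by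
    by_cases h1 : G.Adj p x <;> by_cases h2 : G.Adj p y <;> by_cases h3 : G.Adj p z
    · exact ⟨x, y, hxy, h1.symm, h2.symm, fun v hv => ⟨hv.2.2.2.1, hv.2.2.2.2.1⟩⟩
    · exact ⟨x, y, hxy, h1.symm, h2.symm, fun v hv => ⟨hv.2.2.2.1, hv.2.2.2.2.1⟩⟩
    · exact ⟨x, z, hxz, h1.symm, h3.symm, fun v hv => ⟨hv.2.2.2.1, hv.2.2.2.2.2⟩⟩
    · exact (hh y z x p q hyz hxy.symm hxz.symm h1 hqp h2 h3 hqy hqz hqx).elim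
    · exact ⟨y, z, hyz, h2.symm, h3.symm, fun v hv => ⟨hv.2.2.2.2.1, hv.2.2.2.2.2⟩⟩
    · exact (hh x z y p q hxz hxy hyz.symm h2 hqp h1 h3 hqx hqz hqy).elim
    · exact (hh x y z p q hxy hxz hyz h3 hqp h1 h2 hqx hqy hqz).elim
    · refine (hpM ⟨?_, ?_, ?_, h1, h2, h3⟩).elim
      · exact fun e => hqx (e ▸ hqp)
      · exact fun e => hqy (e ▸ hqp)
      · exact fun e => hqz (e ▸ hqp)
  obtain ⟨t, t', htt, htp, htp', hM⟩ := htwo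
  have hpall : {v | v ∈ Z ∧ G.Adj p v} = Z := by
    by_contra hne
    obtain ⟨r, hr, s, hs, hsn, hrs⟩ := hZconn {v | v ∈ Z ∧ G.Adj p v} (fun v hv => hv.1)
      ⟨q, hq, hqp.symm⟩ hne
    exact hh t t' p r s htt htp htp' hr.2.symm hrs.symm (hM r (hZM hr.1)).1 (hM r (hZM hr.1)).2
      (hM s (hZM hs)).1 (hM s (hZM hs)).2 (fun g => hsn ⟨hs, g.symm⟩)
  exact no_centre hb hG hS hxC hx (b := p) (fun c hc => (hpall.ge (hCZ hc)).2)

/-- In a (bull, house)-free graph at most one vertex of a triangle has private neighbours. -/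
theorem no_two_private (hb : NoBull G) (hh : NoHouse G) {x y z u w : V} (hxy : G.Adj x y)
    (hxz : G.Adj x z) (hyz : G.Adj y z) (hux : G.Adj u x) (hwy : G.Adj w y) (huy : ¬ G.Adj u y)
    (huz : ¬ G.Adj u z) (hwx : ¬ G.Adj w x) (hwz : ¬ G.Adj w z) : False := by
  by_cases huw : G.Adj u w
  · exact hh x y z u w hxy hxz hyz hux hwy huw huy huz hwx hwz
  · exact hb x y z u w hxy hxz hyz hux hwy huy huz hwx hwz huw

/-- In a prime (bull, house)-free graph, a neighbourhood that contains an edge is connected. -/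
theorem nbhd_conn (hb : NoBull G) (hh : NoHouse G) (hG : PrimeOn G Set.univ) {x y z u : V}
    {Z : Set V} (hZ : ∀ v ∈ Z, G.Adj x v) (hy : y ∈ Z) (hz : z ∈ Z) (hyz : G.Adj y z)
    (hxu : G.Adj x u) (huZ : u ∉ Z) : ∃ v ∈ Z, ∃ w, w ∉ Z ∧ G.Adj x w ∧ G.Adj v w := by
  by_contra hcon
  push Not at hcon
  obtain ⟨w, _, hwZ, y', hy', z', hz', h1, h2, h3⟩ := hG.distinguish (Set.subset_univ Z)
    (fun e => huZ (e.ge (Set.mem_univ u))) hy hz hyz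
  have hwx : ¬ G.Adj x w := fun h => hcon y' hy' w hwZ h h2.symm
  exact no_two_private hb hh (hZ y' hy') (hZ z' hz') h1 hxu.symm h2
    (fun h => hcon y' hy' u huZ hxu h.symm) (fun h => hcon z' hz' u huZ hxu h.symm)
    (fun h => hwx h.symm) h3

/-- A prime connected (bull, house)-free graph with a triangle has no set `C` as in `Sturdy` with
an anticentre. All neighbourhoods are connected and contain edges, which yields adjacent `u, p`
with a common anticentre neighbour `a` and with neighbours in `C`; such vertices have the same neighbourhood `S` in `C`. If a vertex
`w` distinguishes two adjacent neighbours of `a` with neighbourhood `S` in `C`, then `w` is a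
centre of `C`, contrary to `no_centre`. -/
theorem house_case (hb : NoBull G) (hh : NoHouse G) (hG : PrimeOn G Set.univ)
    (hconn : ConnOn G Set.univ) {C : Set V} (hS : Sturdy G C) {x y z v : V} (hxy : G.Adj x y)
    (hxz : G.Adj x z) (hyz : G.Adj y z) (hvC : v ∉ C) (hv : ∀ c ∈ C, ¬ G.Adj v c) : False := by
  have noc : ∀ u, ¬ ∀ c ∈ C, G.Adj u c := fun u h => no_centre hb hG hS hvC hv h
  -- every vertex lies in a triangle
  have htri : ∀ u, ∃ s t, G.Adj u s ∧ G.Adj u t ∧ G.Adj s t := by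
    by_contra hcon
    obtain ⟨a, ⟨s, t, has, hat, hst⟩, u, _, hu, hau⟩ :=
      hconn {u | ∃ s t, G.Adj u s ∧ G.Adj u t ∧ G.Adj s t} (Set.subset_univ _)
        ⟨x, y, z, hxy, hxz, hyz⟩ (fun e => hcon fun u => e.ge (Set.mem_univ u))
    have hsu : s ≠ u := fun e => hu ⟨t, a, e ▸ hst, hau.symm, hat.symm⟩
    have htu : t ≠ u := fun e => hu ⟨s, a, e ▸ hst.symm, hau.symm, has.symm⟩
    obtain ⟨r, hr, w, hw, haw, hrw⟩ := nbhd_conn hb hh hG (x := a) (y := s) (z := t) (u := u)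
      (Z := {r | G.Adj a r ∧ r ≠ u}) (fun r hr => hr.1) ⟨has, hsu⟩ ⟨hat, htu⟩ hst hau
      (fun h => h.2 rfl)
    have hwu : w = u := by
      by_contra hne
      exact hw ⟨haw, hne⟩
    subst hwu
    exact hu ⟨a, r, hau.symm, hrw.symm, hr.1⟩
  let A : Set V := {a | a ∉ C ∧ ∀ c ∈ C, ¬ G.Adj a c}
  obtain ⟨c0, hc0, _, _, _⟩ := hS.exists_adj
  have hst : ∀ a ∈ A, ∀ u, G.Adj a u → ∀ y ∈ C, ∀ z ∈ C, G.Adj u y → G.Adj u z → ¬ G.Adj y z :=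
    fun a ha u hau => stable_of_anti hb hS.1 hau ha.2 (noc u)
  obtain ⟨a0, ha0, u, _, huA, hau⟩ := hconn A (Set.subset_univ _) ⟨v, hvC, hv⟩
    (fun e => (e.ge (Set.mem_univ c0)).1 hc0)
  have huC : u ∉ C := fun h => ha0.2 u h hau
  have hnbr : ∀ w, w ∉ C → w ∉ A → ∃ c ∈ C, G.Adj w c := fun w h1 h2 => by
    by_contra hcon
    push Not at hcon
    exact h2 ⟨h1, hcon⟩
  obtain ⟨a, ha, p, hpA, hua, hup, hap⟩ : ∃ a ∈ A, ∃ p, p ∉ A ∧ G.Adj u a ∧ G.Adj u p ∧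
      G.Adj a p := by
    obtain ⟨s, t, hus, hut, hst'⟩ := htri u
    obtain ⟨c, hc, huc⟩ := hnbr u huC huA
    by_contra hcon
    push Not at hcon
    have hcA : c ∉ A := fun h => h.1 hc
    by_cases hsA : s ∈ A
    · have htA : t ∈ A := by
        by_contra h
        exact hcon s hsA t h hus hut hst'
      obtain ⟨r, hr, w, hw, huw, hrw⟩ := nbhd_conn hb hh hG (x := u) (y := s) (z := t) (u := c)
        (Z := {r | G.Adj u r ∧ r ∈ A}) (fun r hr => hr.1) ⟨hus, hsA⟩ ⟨hut, htA⟩ hst' huc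
        (fun h => hcA h.2)
      exact hcon r hr.2 w (fun h => hw ⟨huw, h⟩) hr.1 huw hrw
    · have htA : t ∉ A := fun h => hcon t h s hsA hut hus hst'.symm
      obtain ⟨r, hr, w, hw, huw, hrw⟩ := nbhd_conn hb hh hG (x := u) (y := s) (z := t) (u := a0)
        (Z := {r | G.Adj u r ∧ r ∉ A}) (fun r hr => hr.1) ⟨hus, hsA⟩ ⟨hut, htA⟩ hst' hau.symm
        (fun h => h.2 ha0)
      have hwA : w ∈ A := by
        by_contra h
        exact hw ⟨huw, h⟩
      exact hcon w hwA r hr.2 huw hr.1 hrw.symm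
  have hpC : p ∉ C := fun h => ha.2 p h hap
  -- adjacent neighbours of `a` with neighbours in `C` have the same ones
  have same_sub : ∀ r r', G.Adj a r → G.Adj a r' → G.Adj r r' → (∃ c ∈ C, G.Adj r c) →
      (∃ c ∈ C, G.Adj r' c) → ∀ c ∈ C, G.Adj r c → G.Adj r' c := by
    intro r r' har har' hrr ⟨c1, hc1, hrc1⟩ ⟨c2, hc2, hrc2⟩ c hc hrc
    by_contra hrc'
    have hac : ∀ c ∈ C, ¬ G.Adj c a := fun c hc h => ha.2 c hc h.symm
    by_cases hcom : G.Adj r c2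
    · obtain ⟨d, hd, hcd⟩ := hS.exists_nbr hc2
      exact no_two_private hb hh hcom.symm hrc2.symm hrr hcd.symm hrc.symm
        (fun h => hst a ha r har c2 hc2 d hd hcom h.symm hcd)
        (fun h => hst a ha r' har' c2 hc2 d hd hrc2 h.symm hcd)
        (fun h => hst a ha r har c2 hc2 c hc hcom hrc h.symm) (fun h => hrc' h.symm)
    · exact no_two_private hb hh hrr har.symm har'.symm hrc.symm hrc2.symm (fun h => hrc' h.symm)
        (hac c hc) (fun h => hcom h.symm) (hac c2 hc2)
  obtain ⟨s0, hs0, hus0⟩ := hnbr u huC huA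
  let Q : Set V := {r | G.Adj a r ∧ ∀ c ∈ C, G.Adj r c ↔ G.Adj u c}
  have huQ : u ∈ Q := ⟨hua.symm, fun _ _ => Iff.rfl⟩
  have inQ : ∀ r, G.Adj a r → (∃ c ∈ C, G.Adj r c) → ∀ r' ∈ Q, G.Adj r r' → r ∈ Q := by
    intro r har hr r' hr' hrr
    have hr'c : ∃ c ∈ C, G.Adj r' c := ⟨s0, hs0, (hr'.2 s0 hs0).2 hus0⟩
    refine ⟨har, fun c hc => ⟨fun h => ?_, fun h => ?_⟩⟩
    · exact (hr'.2 c hc).1 (same_sub r r' har hr'.1 hrr hr hr'c c hc h)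
    · exact same_sub r' r hr'.1 har hrr.symm hr'c hr c hc ((hr'.2 c hc).2 h)
  have hpQ : p ∈ Q := inQ p hap (hnbr p hpC hpA) u huQ hup.symm
  obtain ⟨w, _, hwQ, r, hr, r', hr', hrr, hwr, hwr'⟩ := hG.distinguish (Set.subset_univ Q)
    (fun e => G.loopless.irrefl a (e.ge (Set.mem_univ a)).1) huQ hpQ hup
  have hwC : w ∉ C := fun h => hwr' ((hr'.2 w h).2 ((hr.2 w h).1 hwr.symm)).symm
  have hQst : ∀ q ∈ Q, ∀ y ∈ C, ∀ z ∈ C, G.Adj u y → G.Adj y z → ¬ G.Adj q z :=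
    fun q hq y hy z hz huy hyz hqz => hst a ha q hq.1 y hy z hz ((hq.2 y hy).2 huy) hqz hyz
  have hwS : ∀ c ∈ C, G.Adj u c → G.Adj w c := by
    intro c hc huc
    by_contra hwc
    obtain ⟨d, hd, hcd⟩ := hS.exists_nbr hc
    exact no_two_private hb hh ((hr.2 c hc).2 huc).symm ((hr'.2 c hc).2 huc).symm hrr hcd.symm hwr
      (fun h => hQst r hr c hc d hd huc hcd h.symm) (fun h => hQst r' hr' c hc d hd huc hcd h.symm)
      hwc hwr'
  by_cases haw : G.Adj a w
  · exact hwQ (inQ w haw ⟨s0, hs0, hwS s0 hs0 hus0⟩ r hr hwr)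
  have hwSN : ∀ c ∈ C, G.Adj u c → ∀ d ∈ C, G.Adj c d → G.Adj w d := by
    intro c hc huc d hd hcd
    by_contra hwd
    exact no_two_private hb hh ((hr.2 c hc).2 huc) hwr.symm (hwS c hc huc).symm hr.1 hcd.symm
      (ha.2 c hc) haw (fun h => hQst r hr c hc d hd huc hcd h.symm) (fun h => hwd h.symm)
  -- `w` is then a centre of `C`
  obtain ⟨d0, hd0, hsd0⟩ := hS.exists_nbr hs0
  by_cases hall : {c | c ∈ C ∧ G.Adj w c} = C
  · exact noc w (fun c hc => (hall.ge hc).2)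
  obtain ⟨f, hf, hfQ, e, he, d, hd, hed, hfe, hfd⟩ := hS.1.distinguish
    (Q := {c | c ∈ C ∧ G.Adj w c}) (fun c hc => hc.1) hall ⟨hs0, hwS s0 hs0 hus0⟩
    ⟨hd0, hwSN s0 hs0 hus0 d0 hd0 hsd0⟩ hsd0
  have hwf : ¬ G.Adj w f := fun h => hfQ ⟨hf, h⟩
  have hue : ¬ G.Adj u e := fun h => hwf (hwSN e he.1 h f hf hfe.symm)
  have hre : ∀ q ∈ Q, ¬ G.Adj q e := fun q hq h => hue ((hq.2 e he.1).1 h)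
  by_cases hud : G.Adj u d
  · exact no_two_private hb hh hed.symm hd.2.symm he.2.symm ((hr'.2 d hd.1).2 hud) hfe
      (hre r' hr') (fun h => hwr' h.symm) hfd (fun h => hwf h.symm)
  · exact no_two_private hb hh he.2 hd.2 hed hwr.symm hfe (hre r hr)
      (fun h => hud ((hr.2 d hd.1).1 h)) (fun h => hwf h.symm) hfd

/-- Half of the closure argument in `diamond_case`: `x, y, z` and `x', y', z'` are the two
triangles of a prism, and `v` is in the maximal clique containing `x, y, z`; a neighbour of `v`
is in this clique or in the one containing `x', y', z'`. -/
theorem prism_step (hb : NoBull G) (hd : NoDiamond G) {x y z x' y' z' : V}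
    (hxy : G.Adj x y) (hxz : G.Adj x z) (hyz : G.Adj y z) (hx : G.Adj x x') (hy : G.Adj y y')
    (hz : G.Adj z z') (h1 : ¬ G.Adj x' y) (h2 : ¬ G.Adj x' z) (h3 : ¬ G.Adj y' x)
    (h4 : ¬ G.Adj y' z) (h5 : ¬ G.Adj z' x) (h6 : ¬ G.Adj z' y)
    (hxy' : G.Adj x' y') (hxz' : G.Adj x' z') (hyz' : G.Adj y' z') {v w : V}
    (hv : v = x ∨ v = y ∨ v = z ∨ (G.Adj v x ∧ G.Adj v y ∧ G.Adj v z)) (hvw : G.Adj v w) :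
    (w = x ∨ w = y ∨ w = z ∨ (G.Adj w x ∧ G.Adj w y ∧ G.Adj w z)) ∨
    (w = x' ∨ w = y' ∨ w = z' ∨ (G.Adj w x' ∧ G.Adj w y' ∧ G.Adj w z')) := by
  have tri : ∀ {p q r}, G.Adj p q → G.Adj p r → G.Adj q r → ∀ w, G.Adj w p → G.Adj w q →
      w ≠ r → G.Adj w r := fun {p q r} hpq hpr hqr w hwp hwq hwr =>
    hd p q w r hpq hwp.symm hpr hwq.symm hqr hwr
  -- a private neighbour of one triangle vertex belongs to the other clique
  have priv : ∀ {p q r p' q' r' : V}, G.Adj p q → G.Adj p r → G.Adj q r → G.Adj q q' → G.Adj r r' →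
      ¬ G.Adj q' p → ¬ G.Adj q' r → ¬ G.Adj r' p → ¬ G.Adj r' q → G.Adj p' q' → G.Adj p' r' →
      G.Adj q' r' → ∀ w, G.Adj w p → ¬ G.Adj w q → ¬ G.Adj w r →
      w = p' ∨ (G.Adj w p' ∧ G.Adj w q' ∧ G.Adj w r') := by
    intro p q r p' q' r' hpq hpr hqr hq hr g1 g2 g3 g4 k1 k2 k3 w hwp hwq hwr
    have a1 : G.Adj w q' := by
      by_contra hn
      exact hb p q r w q' hpq hpr hqr hwp hq.symm hwq hwr g1 g2 hn
    have a2 : G.Adj w r' := by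
      by_contra hn
      exact hb p r q w r' hpr hpq hqr.symm hwp hr.symm hwr hwq g3 g4 hn
    by_cases e : w = p'
    · exact Or.inl e
    · exact Or.inr ⟨tri k3 k1.symm k2.symm w a1 a2 e, a1, a2⟩
  by_cases e1 : w = x
  · exact Or.inl (Or.inl e1)
  by_cases e2 : w = y
  · exact Or.inl (Or.inr (Or.inl e2))
  by_cases e3 : w = z
  · exact Or.inl (Or.inr (Or.inr (Or.inl e3)))
  by_cases b1 : G.Adj w x <;> by_cases b2 : G.Adj w y <;> by_cases b3 : G.Adj w z
  · exact Or.inl (Or.inr (Or.inr (Or.inr ⟨b1, b2, b3⟩)))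
  · exact (b3 (tri hxy hxz hyz w b1 b2 e3)).elim
  · exact (b2 (tri hxz hxy hyz.symm w b1 b3 e2)).elim
  · rcases priv hxy hxz hyz hy hz h3 h4 h5 h6 hxy' hxz' hyz' w b1 b2 b3 with h | h
    · exact Or.inr (Or.inl h)
    · exact Or.inr (Or.inr (Or.inr (Or.inr h)))
  · exact (b1 (tri hyz hxy.symm hxz.symm w b2 b3 e1)).elim
  · rcases priv hxy.symm hyz hxz hx hz h1 h2 h6 h5 hxy'.symm hyz' hxz' w b2 b1 b3 with h | h
    · exact Or.inr (Or.inr (Or.inl h))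
    · exact Or.inr (Or.inr (Or.inr (Or.inr ⟨h.2.1, h.1, h.2.2⟩)))
  · rcases priv hxz.symm hyz.symm hxy hx hy h2 h1 h4 h3 hxz'.symm hyz'.symm hxy' w b3 b1 b2
      with h | h
    · exact Or.inr (Or.inr (Or.inr (Or.inl h)))
    · exact Or.inr (Or.inr (Or.inr (Or.inr ⟨h.2.1, h.2.2, h.1⟩)))
  · rcases hv with rfl | rfl | rfl | ⟨vx, vy, vz⟩
    · exact (b1 hvw.symm).elim
    · exact (b2 hvw.symm).elim
    · exact (b3 hvw.symm).elim
      -- here `w` is a private neighbour of `v` for the triangles `v, x, y` and `v, x, z`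
    · have n1 : ¬ G.Adj x' v := fun h =>
        h1 (tri vx vy hxy x' h hx.symm (fun e => h2 (e ▸ hyz)))
      have n2 : ¬ G.Adj y' v := fun h =>
        h3 (tri vy vx hxy.symm y' h hy.symm (fun e => h4 (e ▸ hxz)))
      have n3 : ¬ G.Adj z' v := fun h =>
        h5 (tri vz vx hxz.symm z' h hz.symm (fun e => h6 (e ▸ hxy)))
      refine Or.inr (Or.inr (Or.inr (Or.inr ⟨?_, ?_, ?_⟩)))
      · by_contra hn
        exact hb v x y w x' vx vy hxy hvw.symm hx.symm b1 b2 n1 h1 hn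
      · by_contra hn
        exact hb v y x w y' vy vx hxy.symm hvw.symm hy.symm b2 b1 n2 h3 hn
      · by_contra hn
        exact hb v z x w z' vz vx hxz.symm hvw.symm hz.symm b3 b1 n3 h5 hn

/-- In a connected (bull, diamond)-free graph, either each triangle has a simplicial vertex, or
some vertex has a clique as its non-neighbourhood. If `x, y, z` are not simplicial, each has a
private neighbour; these form a second triangle, and the maximal cliques containing the two
triangles of the resulting prism cover the graph. -/
theorem diamond_case (hb : NoBull G) (hd : NoDiamond G) (hconn : ConnOn G Set.univ) {x y z : V}
    (hxy : G.Adj x y) (hxz : G.Adj x z) (hyz : G.Adj y z)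
    (hx : ¬ G.IsClique {v | G.Adj x v}) (hy : ¬ G.IsClique {v | G.Adj y v})
    (hz : ¬ G.IsClique {v | G.Adj z v}) :
    ∃ v, G.IsClique {u | u ≠ v ∧ ¬ G.Adj v u} := by
  have priv : ∀ {x y z}, G.Adj x y → G.Adj x z → G.Adj y z → ¬ G.IsClique {v | G.Adj x v} →
      ∃ x', G.Adj x x' ∧ ¬ G.Adj x' y ∧ ¬ G.Adj x' z := by
    intro x y z hxy hxz hyz hx
    have : ∃ p, G.Adj x p ∧ p ≠ y ∧ ¬ G.Adj p y := by
      by_contra hcon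
      push Not at hcon
      refine hx fun p hp q hq hpq => ?_
      by_cases hpy : p = y
      · subst hpy
        exact (hcon q hq hpq.symm).symm
      by_cases hqy : q = y
      · subst hqy
        exact hcon p hp hpq
      exact hd x y p q hxy hp hq (hcon p hp hpy).symm (hcon q hq hqy).symm hpq
    obtain ⟨p, hp, hpy, hpn⟩ := this
    exact ⟨p, hp, hpn, fun h => hpn (hd x z p y hxz hp hxy h.symm hyz.symm hpy)⟩
  obtain ⟨x', hx, h1, h2⟩ := priv hxy hxz hyz hx
  obtain ⟨y', hy, h3, h4⟩ := priv hxy.symm hyz hxz hy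
  obtain ⟨z', hz, h5, h6⟩ := priv hxz.symm hyz.symm hxy hz
  have hxy' : G.Adj x' y' := by
    by_contra hn
    exact hb x y z x' y' hxy hxz hyz hx.symm hy.symm h1 h2 h3 h4 hn
  have hxz' : G.Adj x' z' := by
    by_contra hn
    exact hb x z y x' z' hxz hxy hyz.symm hx.symm hz.symm h2 h1 h5 h6 hn
  have hyz' : G.Adj y' z' := by
    by_contra hn
    exact hb y z x y' z' hyz hxy.symm hxz.symm hy.symm hz.symm h4 h3 h6 h5 hn
  let K : Set V := {v | v = x ∨ v = y ∨ v = z ∨ (G.Adj v x ∧ G.Adj v y ∧ G.Adj v z)}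
  let K' : Set V := {v | v = x' ∨ v = y' ∨ v = z' ∨ (G.Adj v x' ∧ G.Adj v y' ∧ G.Adj v z')}
  have hall : K ∪ K' = Set.univ := by
    by_contra hne
    obtain ⟨v, hv, w, _, hw, hvw⟩ := hconn (K ∪ K') (Set.subset_univ _) ⟨x, Or.inl (Or.inl rfl)⟩ hne
    rcases hv with hv | hv
    · exact hw (prism_step hb hd hxy hxz hyz hx hy hz h1 h2 h3 h4 h5 h6 hxy' hxz' hyz' hv hvw)
    · exact hw (prism_step hb hd hxy' hxz' hyz' hx.symm hy.symm hz.symm (fun h => h3 h.symm)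
        (fun h => h5 h.symm) (fun h => h1 h.symm) (fun h => h6 h.symm) (fun h => h2 h.symm)
        (fun h => h4 h.symm) hxy hxz hyz hv hvw).symm
  refine ⟨x, fun u hu w hw huw => ?_⟩
  have hin : ∀ u, u ≠ x → ¬ G.Adj x u → u = y' ∨ u = z' ∨ (G.Adj u y' ∧ G.Adj u z') := by
    intro u hux hxu
    rcases (hall.ge (Set.mem_univ u) : u ∈ K ∪ K') with h | h
    · rcases h with h | h | h | h
      · exact (hux h).elim
      · exact (hxu (h ▸ hxy)).elim
      · exact (hxu (h ▸ hxz)).elim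
      · exact (hxu h.1.symm).elim
    · rcases h with h | h | h | h
      · exact (hxu (h ▸ hx)).elim
      · exact Or.inl h
      · exact Or.inr (Or.inl h)
      · exact Or.inr (Or.inr h.2)
  rcases hin u hu.1 hu.2 with rfl | rfl | ⟨a1, a2⟩ <;>
  rcases hin w hw.1 hw.2 with rfl | rfl | ⟨b1, b2⟩
  · exact (huw rfl).elim
  · exact hyz'
  · exact b1.symm
  · exact hyz'.symm
  · exact (huw rfl).elim
  · exact b2.symm
  · exact a1
  · exact a2
  · exact hd y' z' u w hyz' a1.symm b1.symm a2.symm b2.symm huw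

end

/-! ### Partitions of prime graphs -/

section
variable {V : Type*} {G : SimpleGraph V}

/-- If the non-neighbourhood of `v` is perfect, then so is its union with `{v}`, and `v` extends
every clique of the neighbourhood. -/
theorem goodPart_of_antinbhd [Finite V] {v : V} (h : PerfOn G {u | u ≠ v ∧ ¬ G.Adj v u}) :
    GoodPart G Set.univ := by
  refine ⟨{u | ¬ G.Adj v u}, {u | G.Adj v u}, ?_, ?_, ?_, fun K hK _ => ⟨v, trivial, ?_, ?_⟩⟩
  · ext u; simp [em']
  · rw [Set.disjoint_left]; exact fun u h1 h2 => h1 h2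
  · exact PerfOn.simplicial (v := v) (h.mono fun u hu => ⟨hu.2, hu.1⟩)
      fun x hx _ _ hvx => (hx hvx).elim
  · exact fun hv => G.loopless.irrefl v (hK hv)
  · exact fun u hu => hK hu

/-- If the vertices that are not simplicial induce a 3-colourable graph, take one colour class
as `W`: the rest is a bipartite graph with simplicial vertices added. -/
theorem goodPart_of_simplicial [Finite V] [Nonempty V] (hiso : ∀ v, ∃ u, G.Adj v u)
    (h3 : ColOn G {v | ¬ G.IsClique {u | G.Adj v u}} 3) : GoodPart G Set.univ := by
  obtain ⟨f, hf, hfa⟩ := h3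
  set N : Set V := {v | ¬ G.IsClique {u | G.Adj v u}} with hN
  refine ⟨{v | v ∈ N → f v ≠ 2}, {v | v ∈ N ∧ f v = 2}, ?_, ?_, ?_, fun K hK hKc => ?_⟩
  · ext v; simp only [Set.mem_union, Set.mem_ofPred_eq, Set.mem_univ, iff_true]; tauto
  · rw [Set.disjoint_left]; exact fun u h1 h2 => h1 h2.1 h2.2
  · by_contra hP
    obtain ⟨C, hCP, hC⟩ := exists_minImp hP
    have hCN : C ⊆ N := fun v hv hcl => hC.not_simplicial hv
      fun x _ y _ hx hy hxy => hcl hx hy hxy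
    refine hC.not_bip {v | f v = 0} (fun x hx y hy h1 h2 hxy => ?_) (fun x hx y hy h1 h2 hxy => ?_)
    · exact hfa x (hCN hx) y (hCN hy) hxy (h1.trans h2.symm)
    · have := hf x (hCN hx); have := hf y (hCN hy)
      have := hCP hx (hCN hx); have := hCP hy (hCN hy)
      have := hfa x (hCN hx) y (hCN hy) hxy
      simp only [Set.mem_ofPred_eq] at h1 h2
      omega
  · rcases K.eq_empty_or_nonempty with rfl | ⟨u, hu⟩
    · exact ⟨Classical.arbitrary V, trivial, by simp, by simp⟩
    · obtain ⟨v, hv⟩ := hiso u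
      have huniq : ∀ u' ∈ K, u' = u := fun u' hu' => by
        by_contra hne
        exact hfa u' (hK hu').1 u (hK hu).1 (hKc hu' hu hne) ((hK hu').2.trans (hK hu).2.symm)
      refine ⟨v, trivial, fun hvK => hv.ne (huniq v hvK).symm, fun u' hu' => ?_⟩
      rw [huniq u' hu']; exact hv.symm

/-- The structural core: a prime graph of the class has a partition as in `GoodPart`. -/
theorem prime_goodPart [Finite V] [Nonempty V] (hb : NoBull G)
    (hH : NoHouse G ∨ NoHammer G ∨ NoDiamond G) (hG : PrimeOn G Set.univ)
    (h3 : ∀ X : Set V, (∀ a ∈ X, ∀ b ∈ X, ∀ c ∈ X, G.Adj a b → G.Adj a c → G.Adj b c → False) →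
      ColOn G X 3) : GoodPart G Set.univ := by
  by_cases hperf : PerfOn G Set.univ
  · refine ⟨Set.univ, ∅, by simp, by simp, hperf, fun K hK _ => ?_⟩
    have : K = ∅ := by simpa using hK
    subst this
    exact ⟨Classical.arbitrary V, trivial, by simp, by simp⟩
  have hconn : ConnOn G Set.univ := by
    intro Y hY hne hnu
    by_contra hcon
    push Not at hcon
    obtain ⟨s1, s2⟩ := hG.cut hY hne hnu (fun z hz y _ hyY => hcon z hz y trivial hyY)
    refine hperf (perfOn_of_bip Y (fun x _ y _ hx hy hxy => hxy.ne (s1 hx hy))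
      (fun x _ y _ hx hy hxy => hxy.ne (s2 ⟨trivial, hx⟩ ⟨trivial, hy⟩)))
  have hiso : ∀ v, ∃ u, G.Adj v u := by
    intro v
    by_cases hv : ({v} : Set V) = Set.univ
    · refine (hperf (perfOn_of_bip {v} (fun x _ y _ hx hy hxy => hxy.ne (hx.trans hy.symm))
        (fun x _ _ _ hx _ _ => hx ?_))).elim
      rw [hv]; trivial
    · obtain ⟨y, rfl, z, _, _, h⟩ := hconn {v} (Set.subset_univ _) ⟨v, rfl⟩ hv
      exact ⟨z, h⟩
  by_cases hM : ∃ v, PerfOn G {u | u ≠ v ∧ ¬ G.Adj v u}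
  · exact goodPart_of_antinbhd hM.choose_spec
  have hC : ∀ v, ∃ C, v ∉ C ∧ (∀ c ∈ C, ¬ G.Adj v c) ∧ MinImp G C := by
    intro v
    obtain ⟨C, hCs, hC⟩ := exists_minImp (fun h => hM ⟨v, h⟩)
    exact ⟨C, fun h => (hCs h).1 rfl, fun c hc => (hCs hc).2, hC⟩
  refine goodPart_of_simplicial hiso (h3 _ fun a ha b hb' c hc hab hac hbc => ?_)
  obtain ⟨C, haC, haC', hCm⟩ := hC a
  rcases hH with hH | hH | hH
  · exact house_case hb hH hG hconn hCm.sturdy hab hac hbc haC haC'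
  · exact hammer_case hb hH hG hconn hCm hab hac hbc haC haC'
  · obtain ⟨v, hv⟩ := diamond_case hb hH hconn hab hac hbc ha hb' hc
    obtain ⟨D, hvD, hvD', hDm⟩ := hC v
    have hcl : ∀ x ∈ D, ∀ y ∈ D, x ≠ y → G.Adj x y := fun x hx y hy hxy =>
      hv ⟨fun h => hvD (h ▸ hx), hvD' x hx⟩ ⟨fun h => hvD (h ▸ hy), hvD' y hy⟩ hxy
    obtain ⟨d, hd⟩ := hDm.nonempty
    exact hDm.not_simplicial hd fun x hx y hy _ _ hxy => hcl x hx y hy hxy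

end

/-! ### Reduction to prime graphs -/

section
variable {V : Type*} {G : SimpleGraph V}

theorem PrimeOn.induce_univ {s : Set V} (h : PrimeOn G s) : PrimeOn (G.induce s) Set.univ := by
  intro X hX
  have hm : ModuleIn G s (Subtype.val '' X) := by
    refine ⟨by rintro _ ⟨x, _, rfl⟩; exact x.2, fun y hy hyX => ?_⟩
    rcases hX.2 ⟨y, hy⟩ trivial (fun h => hyX ⟨_, h, rfl⟩) with h | h
    · left; rintro _ ⟨x, hx, rfl⟩; exact h x hx
    · right; rintro _ ⟨x, hx, rfl⟩; exact h x hx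
  rcases h _ hm with h | h
  · exact Or.inl fun a ha b hb => Subtype.ext (h ⟨a, ha, rfl⟩ ⟨b, hb, rfl⟩)
  · refine Or.inr (Set.eq_univ_of_forall fun a => ?_)
    obtain ⟨b, hb, hab⟩ := (h.ge a.2 : (a : V) ∈ Subtype.val '' X)
    rwa [← Subtype.ext hab]

theorem PerfOn.of_induce {s : Set V} {A : Set s} (h : PerfOn (G.induce s) A) :
    PerfOn G (Subtype.val '' A) := by
  classical
  intro t ht
  obtain ⟨k, ⟨f, hf, hfa⟩, K, hK, hKc⟩ := h (Subtype.val ⁻¹' t) (fun a ha => by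
    obtain ⟨b, hb, hab⟩ := ht ha
    rwa [← Subtype.ext hab])
  have hts : ∀ v ∈ t, v ∈ s := fun v hv => by
    obtain ⟨b, _, rfl⟩ := ht hv
    exact b.2
  refine ⟨k, ⟨fun v => if hv : v ∈ s then f ⟨v, hv⟩ else 0, fun v hv => ?_,
    fun u hu v hv huv => ?_⟩, K.map (Function.Embedding.subtype _), ?_, ?_⟩
  · simpa [hts v hv] using hf ⟨v, hts v hv⟩ hv
  · simpa [hts v hv, hts u hu] using hfa ⟨u, hts u hu⟩ hu ⟨v, hts v hv⟩ hv huv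
  · intro v hv
    obtain ⟨a, ha, rfl⟩ := Finset.mem_map.1 (Finset.mem_coe.1 hv)
    exact hK ha
  · refine ⟨?_, by rw [Finset.card_map]; exact hKc.2⟩
    intro u hu v hv huv
    obtain ⟨a, ha, rfl⟩ := Finset.mem_map.1 (Finset.mem_coe.1 hu)
    obtain ⟨b, hb, rfl⟩ := Finset.mem_map.1 (Finset.mem_coe.1 hv)
    exact hKc.1 ha hb (fun e => huv (by rw [e]))

theorem GoodPart.of_induce {s : Set V} (h : GoodPart (G.induce s) Set.univ) : GoodPart G s := by
  classical
  obtain ⟨P, W, h1, h2, h3, h4⟩ := h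
  refine ⟨Subtype.val '' P, Subtype.val '' W, ?_, ?_, h3.of_induce, fun K hK hKc => ?_⟩
  · rw [← Set.image_union, h1]; simp
  · exact Set.disjoint_image_of_injective Subtype.val_injective h2
  · obtain ⟨v, -, hvK, hv⟩ := h4 (K.subtype (· ∈ s)) (fun a ha => by
      obtain ⟨b, hb, hab⟩ := hK (Finset.mem_coe.2 (Finset.mem_subtype.1 (Finset.mem_coe.1 ha)))
      rwa [← Subtype.ext hab]) (fun a ha b hb hab => by
        exact hKc (Finset.mem_subtype.1 (Finset.mem_coe.1 ha))
          (Finset.mem_subtype.1 (Finset.mem_coe.1 hb)) (fun e => hab (Subtype.ext e)))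
    refine ⟨v, v.2, fun h => hvK (Finset.mem_subtype.2 h), fun u hu => ?_⟩
    obtain ⟨b, _, rfl⟩ := hK hu
    exact hv b (Finset.mem_subtype.2 hu)

/-- Contracting proper homogeneous sets reduces every graph of the class to prime ones. -/
theorem wdiv_all [Finite V] (hb : NoBull G) (hH : NoHouse G ∨ NoHammer G ∨ NoDiamond G)
    (h3 : ∀ X : Set V, (∀ a ∈ X, ∀ b ∈ X, ∀ c ∈ X, G.Adj a b → G.Adj a c → G.Adj b c → False) →
      ColOn G X 3) (n : ℕ) : ∀ s : Set V, s.Nonempty → s.ncard ≤ n → WDiv G s := by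
  induction n with
  | zero =>
    intro s hs hn
    have := (Set.ncard_pos).2 hs
    omega
  | succ n ih =>
    intro s hs hn
    by_cases hp : PrimeOn G s
    · have : Nonempty s := hs.to_subtype
      refine (GoodPart.of_induce (prime_goodPart ?_ ?_ hp.induce_univ ?_)).wdiv
      · exact fun a b c d e => hb a b c d e
      · rcases hH with h | h | h
        · exact Or.inl fun a b c d e => h a b c d e
        · exact Or.inr (Or.inl fun a b c d e => h a b c d e)
        · exact Or.inr (Or.inr fun a b c d h1 h2 h3 h4 h5 hne =>
            h a b c d h1 h2 h3 h4 h5 (fun e => hne (Subtype.ext e)))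
      · intro X hX
        obtain ⟨f, hf, hfa⟩ := h3 (Subtype.val '' X) (by
          rintro _ ⟨a, ha, rfl⟩ _ ⟨b, hb, rfl⟩ _ ⟨c, hc, rfl⟩
          exact hX a ha b hb c hc)
        exact ⟨fun v => f v, fun v hv => hf v ⟨v, hv, rfl⟩,
          fun u hu v hv => hfa u ⟨u, hu, rfl⟩ v ⟨v, hv, rfl⟩⟩
    · unfold PrimeOn at hp
      push Not at hp
      obtain ⟨X, hX, hnt, hne⟩ := hp
      obtain ⟨x, hx, y, hy, hxy⟩ := hnt
      refine WDiv.of_module hX hx (ih _ ⟨x, Or.inl rfl⟩ ?_) (ih _ ⟨x, hx⟩ ?_)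
      · have : (insert x (s \ X)).ncard < s.ncard := by
          refine Set.ncard_lt_ncard (Set.ssubset_iff_of_subset ?_ |>.2 ⟨y, hX.1 hy, ?_⟩)
          · rintro z (rfl | hz)
            · exact hX.1 hx
            · exact hz.1
          · rintro (h | h)
            · exact hxy h.symm
            · exact h.2 hy
        omega
      · have : X.ncard < s.ncard := Set.ncard_lt_ncard (hX.1.ssubset_of_ne hne)
        omega

end

/-! ### Translation to the definitions with suprema and induced copies -/

section
variable {V : Type*} {G : SimpleGraph V}

theorem cliqueNumOn_bdd [Finite V] (s : Set V) :
    BddAbove {n | ∃ t : Finset V, ↑t ⊆ s ∧ G.IsNClique n t} := by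
  have := Fintype.ofFinite V
  refine ⟨Fintype.card V, ?_⟩
  rintro n ⟨t, -, ht⟩
  rw [← ht.2]
  exact Finset.card_le_univ t

theorem PerfOn.isPerfect [Finite V] {A : Set V} (h : PerfOn G A) : IsPerfect (G.induce A) := by
  classical
  intro s
  obtain ⟨k, ⟨f, hf, hfa⟩, t, ht, htc⟩ := h (Subtype.val '' s) (by
    rintro _ ⟨a, _, rfl⟩; exact a.2)
  have hcol : ((G.induce A).induce s).Colorable k :=
    ⟨Coloring.mk (fun v => (⟨f v.1.1, hf _ ⟨v.1, v.2, rfl⟩⟩ : Fin k)) (fun {u v} huv e =>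
      hfa _ ⟨u.1, u.2, rfl⟩ _ ⟨v.1, v.2, rfl⟩ huv (congrArg Fin.val e))⟩
  have hct : (G.induce A).IsNClique k (t.subtype (· ∈ A)) := by
    refine ⟨fun a ha b hb hab => ?_, ?_⟩
    · exact htc.1 (Finset.mem_subtype.1 (Finset.mem_coe.1 ha))
        (Finset.mem_subtype.1 (Finset.mem_coe.1 hb)) (fun e => hab (Subtype.ext e))
    · rw [Finset.card_subtype, Finset.filter_true_of_mem, htc.2]
      intro v hv
      obtain ⟨a, _, rfl⟩ := ht hv
      exact a.2
  have hts : (↑(t.subtype (· ∈ A)) : Set A) ⊆ s := fun a ha => by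
    obtain ⟨b, hb, hab⟩ := ht (Finset.mem_subtype.1 (Finset.mem_coe.1 ha))
    rwa [← Subtype.ext hab]
  have hle : ∀ n, (∃ t : Finset A, ↑t ⊆ s ∧ (G.induce A).IsNClique n t) → n ≤ k := by
    rintro n ⟨t', ht', hc'⟩
    rw [← hc'.2]
    exact ColOn.card_le ⟨fun v : A => f v, fun v hv => hf _ ⟨v, hv, rfl⟩,
      fun u hu v hv huv => hfa _ ⟨u, hu, rfl⟩ _ ⟨v, hv, rfl⟩ huv⟩ ht' hc'.1
  have hnum : cliqueNumOn (G.induce A) s = k :=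
    le_antisymm (csSup_le ⟨k, _, hts, hct⟩ hle) (le_csSup (cliqueNumOn_bdd s) ⟨_, hts, hct⟩)
  rw [hnum]
  refine le_antisymm hcol.chromaticNumber_le ?_
  have hclq : ((G.induce A).induce s).IsNClique k ((t.subtype (· ∈ A)).subtype (· ∈ s)) := by
    refine ⟨fun a ha b hb hab => ?_, ?_⟩
    · exact hct.1 (Finset.mem_subtype.1 (Finset.mem_coe.1 ha))
        (Finset.mem_subtype.1 (Finset.mem_coe.1 hb)) (fun e => hab (Subtype.ext e))
    · rw [Finset.card_subtype, Finset.filter_true_of_mem, hct.2]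
      exact fun v hv => hts hv
  have := hclq.1.card_le_chromaticNumber
  rwa [hclq.2] at this

theorem WDiv.partition [Finite V] {s : Set V} (h : WDiv G s) :
    ∃ A B : Set V, A ∪ B = s ∧ A ∩ B = ∅ ∧
      IsPerfect (G.induce A) ∧ cliqueNumOn G B < cliqueNumOn G s := by
  obtain ⟨P, W, h1, h2, h3, h4⟩ := h (fun _ => 1) (fun _ => Nat.one_pos)
  refine ⟨P, W, h1, h2.inter_eq, h3.isPerfect, ?_⟩
  obtain ⟨t, ht, htc⟩ := Nat.sSup_mem (s := {n | ∃ t : Finset V, ↑t ⊆ W ∧ G.IsNClique n t})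
    ⟨0, ∅, by simp, by simp [isNClique_iff]⟩ (cliqueNumOn_bdd W)
  obtain ⟨K, hK, hKc, hlt⟩ := h4 t ht htc.1
  simp only [Finset.sum_const, smul_eq_mul, mul_one] at hlt
  have : K.card ≤ cliqueNumOn G s := le_csSup (cliqueNumOn_bdd s) ⟨K, hK, hKc, rfl⟩
  have h5 : t.card = cliqueNumOn G W := htc.2
  omega

/-- An injective map that preserves and reflects adjacency of all pairs `i < j` exhibits an
induced copy. -/
theorem containsInduced_of_lt {n : ℕ} {H : SimpleGraph (Fin n)} (g : Fin n → V)
    (hinj : Function.Injective g) (h : ∀ i j, i < j → (G.Adj (g i) (g j) ↔ H.Adj i j)) :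
    ContainsInduced G H := by
  refine ⟨⟨g, hinj⟩, fun i j => ?_⟩
  rcases lt_trichotomy i j with hij | rfl | hij
  · exact h i j hij
  · simp
  · rw [G.adj_comm, H.adj_comm]
    exact h j i hij

end

section
variable {V : Type*} {G : SimpleGraph V}

theorem IsFree.noBull (h : IsFree G bull) : NoBull G := by
  intro a b c d e hab hac hbc hda heb hdb hdc hea hec hde
  refine h (containsInduced_of_lt ![a, b, c, d, e] ?_ ?_)
  · intro i j hij
    have h1 : d ≠ b := by rintro rfl; exact hdc hbc
    have h2 : d ≠ c := by rintro rfl; exact hdb hbc.symm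
    have h3 : e ≠ a := by rintro rfl; exact hec hac
    have h4 : e ≠ c := by rintro rfl; exact hea hac.symm
    have h5 : d ≠ e := by rintro rfl; exact hdb heb
    have := hab.ne; have := hac.ne; have := hbc.ne; have := hda.ne; have := heb.ne
    fin_cases i <;> fin_cases j <;> simp_all
  · intro i j hij
    have := hda.symm; have := heb.symm
    rw [G.adj_comm] at hdb hdc hea hec
    fin_cases i <;> fin_cases j <;> simp_all [bull]

theorem IsFree.noHammer (h : IsFree G hammer) : NoHammer G := by
  intro x y z p q hxy hxz hyz hpz hqp hpx hpy hqx hqy hqz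
  refine h (containsInduced_of_lt ![x, y, z, p, q] ?_ ?_)
  · intro i j hij
    have h1 : p ≠ x := by rintro rfl; exact hpy hxy
    have h2 : p ≠ y := by rintro rfl; exact hpx hxy.symm
    have h3 : q ≠ x := by rintro rfl; exact hqy hxy
    have h4 : q ≠ y := by rintro rfl; exact hqx hxy.symm
    have h5 : q ≠ z := by rintro rfl; exact hqx hxz.symm
    have := hxy.ne; have := hxz.ne; have := hyz.ne; have := hpz.ne; have := hqp.ne
    fin_cases i <;> fin_cases j <;> simp_all
  · intro i j hij
    have := hpz.symm; have := hqp.symm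
    rw [G.adj_comm] at hpx hpy hqx hqy hqz
    fin_cases i <;> fin_cases j <;> simp_all [hammer]

theorem IsFree.noHouse (h : IsFree G house) : NoHouse G := by
  intro x y z u w hxy hxz hyz hux hwy huw huy huz hwx hwz
  refine h (containsInduced_of_lt ![x, w, z, u, y] ?_ ?_)
  · intro i j hij
    have h1 : u ≠ y := by rintro rfl; exact huz hyz
    have h2 : u ≠ z := by rintro rfl; exact huy hyz.symm
    have h3 : w ≠ x := by rintro rfl; exact hwz hxz
    have h4 : w ≠ z := by rintro rfl; exact hwx hxz.symm
    have := hxy.ne; have := hxz.ne; have := hyz.ne; have := hux.ne; have := hwy.ne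
    have := huw.ne
    fin_cases i <;> fin_cases j <;> simp_all
  · intro i j hij
    have := hux.symm; have := huw.symm; have := hyz.symm
    have := fun h => hwx (G.adj_symm h); have := fun h => huz (G.adj_symm h)
    fin_cases i <;> fin_cases j <;> simp_all [house, pathGraph_adj]

theorem IsFree.noDiamond (h : IsFree G diamond) : NoDiamond G := by
  intro a b c d hab hac had hbc hbd hne
  by_contra hcd
  refine h (containsInduced_of_lt ![a, b, c, d] ?_ ?_)
  · intro i j hij
    have := hab.ne; have := hac.ne; have := had.ne; have := hbc.ne; have := hbd.ne
    fin_cases i <;> fin_cases j <;> simp_all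
  · intro i j hij
    fin_cases i <;> fin_cases j <;> simp_all [diamond]

theorem isFree_triangle
    (h : ∀ a b c, G.Adj a b → G.Adj a c → G.Adj b c → False) :
    IsFree G (SimpleGraph.cycleGraph 3) := by
  rintro ⟨f, hf⟩
  exact h (f 0) (f 1) (f 2) ((hf _ _).2 (by decide)) ((hf _ _).2 (by decide))
    ((hf _ _).2 (by decide))

end

/-- For `H` one of house, hammer, diamond, the class of (bull, H)-free graphs is
perfect-Pollyanna: for every hereditary class `𝒢` in which every triangle-free graph is
3-colorable, every (bull, H)-free graph in `𝒢` is perfectly divisible. -/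
theorem bull_H_free_perfectPollyanna
    (𝒢 : ∀ (V : Type) [Fintype V], SimpleGraph V → Prop)
    (hered : ∀ (V W : Type) [Fintype V] [Fintype W] (G : SimpleGraph V) (H : SimpleGraph W),
        𝒢 V G → ContainsInduced G H → 𝒢 W H)
    (h3col : ∀ (V : Type) [Fintype V] (G : SimpleGraph V),
        𝒢 V G → IsFree G (SimpleGraph.cycleGraph 3) → G.Colorable 3)
    {V : Type} [Fintype V] (G : SimpleGraph V) (hG : 𝒢 V G)
    (hbull : IsFree G bull)
    (hH : IsFree G house ∨ IsFree G hammer ∨ IsFree G diamond) :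
    PerfectlyDivisible G := by
  classical
  have h3 : ∀ X : Set V,
      (∀ a ∈ X, ∀ b ∈ X, ∀ c ∈ X, G.Adj a b → G.Adj a c → G.Adj b c → False) → ColOn G X 3 := by
    intro X hX
    obtain ⟨f⟩ := h3col X (G.induce X)
      (hered V X G (G.induce X) hG ⟨Function.Embedding.subtype _, fun _ _ => Iff.rfl⟩)
      (isFree_triangle fun a b c => hX a a.2 b b.2 c c.2)
    refine ⟨fun v => if hv : v ∈ X then (f ⟨v, hv⟩).val else 0, fun v hv => ?_,
      fun u hu v hv huv => ?_⟩
    · simp [hv]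
    · have h := f.valid (v := ⟨u, hu⟩) (w := ⟨v, hv⟩) huv
      simpa [hu, hv, Fin.ext_iff] using h
  exact fun s hs => (wdiv_all hbull.noBull
    (hH.imp IsFree.noHouse (Or.imp IsFree.noHammer IsFree.noDiamond)) h3 _ s hs le_rfl).partition
end
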